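/- arXiv:1208.1032 — 3 statements merged into one kernel-verified Lean document; each statement's English description precedes it below -/
import Mathlib

section
/- Weighted Poincaré inequality with sharp constant N/2: Let N ≥ 1 and K(y) = exp(|y|²/4). Let f : ℝ^N → ℝ be locally integrable with a weak gradient g : ℝ^N → ℝ^N, and suppose ∫_{ℝ^N} K(y)|f(y)|² dy < ∞ and ∫_{ℝ^N} K(y)|g(y)|² dy < ∞. Then (N/2) ∫_{ℝ^N} K(y)|f(y)|² dy ≤ ∫_{ℝ^N} K(y)|g(y)|² dy. -/
open MeasureTheory

/-- `g` is a weak gradient of the locally integrable function `f` on `ℝ^N`. -/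
def HasWeakGradient {N : ℕ} (f : EuclideanSpace ℝ (Fin N) → ℝ)
    (g : EuclideanSpace ℝ (Fin N) → EuclideanSpace ℝ (Fin N)) : Prop :=
  MeasureTheory.LocallyIntegrable f volume ∧
  ∀ φ : EuclideanSpace ℝ (Fin N) → ℝ, ContDiff ℝ (⊤ : ℕ∞) φ → HasCompactSupport φ →
    ∀ i : Fin N,
      ∫ y, f y * fderiv ℝ φ y (EuclideanSpace.single i 1) = -∫ y, g y i * φ y

/-!
Write `K = exp (a‖·‖²)` and let `F` be the weak derivative of `f` along `v`. For a cutoff `χ ≥ 0`,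
expand `0 ≤ ∫ χ K (F + 2a⟪x, v⟫f)²`. The cross term is `2a ∫ χ K ⟪x, v⟫ ∂ᵥ(f²)`; since `K` grows at
rate `∂ᵥK = 2a⟪x, v⟫K`, moving the derivative onto `χ K ⟪x, v⟫` absorbs the term
`4a² ∫ χ K ⟪x, v⟫² f²` and leaves `2a ∫ K f² (‖v‖² χ + ⟪x, v⟫ ∂ᵥχ) ≤ ∫ χ K F²`. For `χ = b(r·)` with
`b` a bump function, `⟪x, v⟫ ∂ᵥχ` is a fixed bounded function of `r x` vanishing at `0`, so it
disappears as `r → 0` although only `K f²`, and not `‖x‖ K f²`, is known to be integrable. Summing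
over an orthonormal basis produces the dimension.

A weak gradient in the sense above need not be measurable: a non-measurable component only enters
through junk integrals, and is replaced by the weak derivative `0`.
-/

open Filter Set ContinuousLinearMap
open scoped Topology ContDiff Convolution RealInnerProductSpace

section SquareIntegrableConvolution

variable {G : Type*} [TopologicalSpace G] [AddCommGroup G] [IsTopologicalAddGroup G]
  [MeasurableSpace G] [BorelSpace G] {μ : Measure G} [μ.IsAddLeftInvariant] [μ.IsNegInvariant]
  {f g : G → ℝ}

lemma convolutionExists_of_memLp_two (hf : MemLp f 2 μ) (hg : MemLp g 2 μ) :
    ConvolutionExists f g (lsmul ℝ ℝ) μ := fun x ↦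
  hf.integrable_mul (hg.comp_measurePreserving (μ.measurePreserving_sub_left x))

lemma continuous_convolution_of_memLp_two [R1Space G]
    [IsLocallyFiniteMeasure μ] [μ.InnerRegularCompactLTTop] (hf : MemLp f 2 μ) (hg : MemLp g 2 μ) :
    Continuous (f ⋆[lsmul ℝ ℝ, μ] g) := by
  have hg' : MemLp (fun t ↦ g (-t)) 2 μ :=
    hg.comp_measurePreserving (Measure.measurePreserving_neg μ)
  have heq : f ⋆[lsmul ℝ ℝ, μ] g =
      fun x : G ↦ ⟪hf.toLp f, DomAddAct.mk (-x) +ᵥ hg'.toLp (fun t ↦ g (-t))⟫ := by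
    funext x
    rw [DomAddAct.mk_vadd_toLp, L2.inner_def, convolution_def]
    have hgx : MemLp (fun t ↦ g (-(-x +ᵥ t))) 2 μ :=
      hg'.comp_measurePreserving (measurePreserving_vadd (-x) μ)
    refine integral_congr_ae ?_
    filter_upwards [hf.coeFn_toLp, hgx.coeFn_toLp] with t hft hgt
    rw [hft, hgt]
    simp [neg_add_eq_sub, mul_comm]
  rw [heq]
  have : Fact ((2 : ENNReal) ≠ ⊤) := ⟨ENNReal.ofNat_ne_top⟩
  exact continuous_const.inner
    ((DomAddAct.continuous_mk.comp continuous_neg).vadd continuous_const)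

end SquareIntegrableConvolution

section Mollification

variable {E : Type*} [NormedAddCommGroup E] [NormedSpace ℝ E] [FiniteDimensional ℝ E]
  [MeasurableSpace E] [BorelSpace E] {μ : Measure E} [μ.IsAddHaarMeasure]

lemma integral_mul_convolution {ρ f g : E → ℝ} (hρ : Continuous ρ) (hρc : HasCompactSupport ρ)
    (hf : MemLp f 2 μ) (hg : MemLp g 2 μ) :
    ∫ x, f x * (ρ ⋆[lsmul ℝ ℝ, μ] g) x ∂μ =
      (ρ ⋆[lsmul ℝ ℝ, μ] (g ⋆[lsmul ℝ ℝ, μ] fun x ↦ f (-x))) 0 := by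
  have hf' : MemLp (fun x ↦ f (-x)) 2 μ :=
    hf.comp_measurePreserving (Measure.measurePreserving_neg μ)
  rw [← convolution_assoc (lsmul ℝ ℝ) (lsmul ℝ ℝ) (lsmul ℝ ℝ) (lsmul ℝ ℝ)
    (fun a b c ↦ mul_assoc a b c) hρ.aestronglyMeasurable hg.1 hf'.1]
  · simp [convolution_def, mul_comm]
  · exact .of_forall (hρc.convolutionExists_left _ hρ (hg.locallyIntegrable one_le_two))
  · exact .of_forall (convolutionExists_of_memLp_two hg.norm hf'.norm)
  · exact hρc.norm.convolutionExists_left _ hρ.norm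
      (continuous_convolution_of_memLp_two hg.norm hf'.norm).locallyIntegrable 0

lemma tendsto_integral_mul_normed_convolution {ι : Type*} {l : Filter ι}
    {φ : ι → ContDiffBump (0 : E)} (hφ : Tendsto (fun i ↦ (φ i).rOut) l (𝓝 0))
    {f g : E → ℝ} (hf : MemLp f 2 μ) (hg : MemLp g 2 μ) :
    Tendsto (fun i ↦ ∫ x, f x * ((φ i).normed μ ⋆[lsmul ℝ ℝ, μ] g) x ∂μ) l
      (𝓝 (∫ x, f x * g x ∂μ)) := by
  have hf' : MemLp (fun x ↦ f (-x)) 2 μ :=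
    hf.comp_measurePreserving (Measure.measurePreserving_neg μ)
  have h0 : (g ⋆[lsmul ℝ ℝ, μ] fun x ↦ f (-x)) 0 = ∫ x, f x * g x ∂μ := by
    simp [convolution_def, mul_comm]
  simp only [integral_mul_convolution (φ _).continuous_normed (φ _).hasCompactSupport_normed hf hg,
    ← h0]
  exact ContDiffBump.convolution_tendsto_right_of_continuous hφ
    (continuous_convolution_of_memLp_two hg hf') 0

end Mollification

section WeakLineDeriv

variable {E : Type*} [NormedAddCommGroup E] [NormedSpace ℝ E] [MeasurableSpace E]

/-- `F` is the weak derivative of `f` in the direction `v` with respect to `μ`. Local integrability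
of both functions is included, so that the integrals against test functions are genuine. -/
structure HasWeakLineDeriv (f F : E → ℝ) (v : E) (μ : Measure E) : Prop where
  locallyIntegrable : LocallyIntegrable f μ
  locallyIntegrable_deriv : LocallyIntegrable F μ
  integral_mul_fderiv {φ : E → ℝ} (hφ : ContDiff ℝ ∞ φ) (hφc : HasCompactSupport φ) :
    ∫ x, f x * fderiv ℝ φ x v ∂μ = -∫ x, F x * φ x ∂μ

variable {f F g G : E → ℝ} {v : E} {μ : Measure E}

section OpensMeasurable

variable [OpensMeasurableSpace E] {φ : E → ℝ}

lemma integrable_mul_fderiv_of_hasCompactSupport (hf : LocallyIntegrable f μ)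
    (hφ : ContDiff ℝ ∞ φ) (hφc : HasCompactSupport φ) :
    Integrable (fun x ↦ f x * fderiv ℝ φ x v) μ :=
  hf.integrable_smul_right_of_hasCompactSupport
    ((hφ.continuous_fderiv (by simp)).clm_apply continuous_const) (hφc.fderiv_apply ℝ v)

lemma HasWeakLineDeriv.integrable_mul_fderiv_add (hf : HasWeakLineDeriv f F v μ)
    (hφ : ContDiff ℝ ∞ φ) (hφc : HasCompactSupport φ) :
    Integrable (fun x ↦ f x * fderiv ℝ φ x v + F x * φ x) μ :=
  (integrable_mul_fderiv_of_hasCompactSupport hf.locallyIntegrable hφ hφc).add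
    (hf.locallyIntegrable_deriv.integrable_smul_right_of_hasCompactSupport hφ.continuous hφc)

lemma HasWeakLineDeriv.integral_mul_fderiv_add_eq_zero (hf : HasWeakLineDeriv f F v μ)
    (hφ : ContDiff ℝ ∞ φ) (hφc : HasCompactSupport φ) :
    ∫ x, f x * fderiv ℝ φ x v + F x * φ x ∂μ = 0 := by
  have hint : Integrable (fun x ↦ F x * φ x) μ :=
    hf.locallyIntegrable_deriv.integrable_smul_right_of_hasCompactSupport hφ.continuous hφc
  rw [integral_add (integrable_mul_fderiv_of_hasCompactSupport hf.locallyIntegrable hφ hφc) hint,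
    hf.integral_mul_fderiv hφ hφc, neg_add_cancel]

end OpensMeasurable

variable [FiniteDimensional ℝ E] [BorelSpace E] [μ.IsAddHaarMeasure]

lemma HasWeakLineDeriv.fderiv_convolution (hf : HasWeakLineDeriv f F v μ) {ρ : E → ℝ}
    (hρ : ContDiff ℝ ∞ ρ) (hρc : HasCompactSupport ρ) (x : E) :
    fderiv ℝ (ρ ⋆[lsmul ℝ ℝ, μ] f) x v = (ρ ⋆[lsmul ℝ ℝ, μ] F) x := by
  have hρ1 : ContDiff ℝ 1 ρ := hρ.of_le (mod_cast le_top)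
  have hint : ConvolutionExistsAt (fderiv ℝ ρ) f x
      ((lsmul ℝ ℝ : ℝ →L[ℝ] ℝ →L[ℝ] ℝ).precompL E) μ :=
    (hρc.fderiv ℝ).convolutionExists_left _ (hρ1.continuous_fderiv one_ne_zero)
      hf.locallyIntegrable x
  have hreflect (t : E) : fderiv ℝ (fun t ↦ ρ (x - t)) t v = -fderiv ℝ ρ (x - t) v := by
    have h : HasFDerivAt (fun t ↦ ρ (x - t)) _ t :=
      (hρ1.differentiable one_ne_zero (x - t)).hasFDerivAt.comp t ((hasFDerivAt_id t).const_sub x)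
    simp [h.fderiv]
  have htest := hf.integral_mul_fderiv (φ := fun t ↦ ρ (x - t))
    (hρ.comp (contDiff_const.sub contDiff_id)) (hρc.comp_homeomorph (Homeomorph.subLeft x))
  calc fderiv ℝ (ρ ⋆[lsmul ℝ ℝ, μ] f) x v
      = ∫ t, fderiv ℝ ρ (x - t) v * f t ∂μ := by
        rw [(hρc.hasFDerivAt_convolution_left _ hρ1 hf.locallyIntegrable x).fderiv,
          convolution_eq_swap, integral_apply hint.integrable_swap]
        rfl
    _ = -∫ t, f t * fderiv ℝ (fun t ↦ ρ (x - t)) t v ∂μ := by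
        simp only [hreflect, mul_neg, integral_neg, neg_neg, mul_comm]
    _ = ∫ t, F t * ρ (x - t) ∂μ := by
        rw [htest, neg_neg]
    _ = (ρ ⋆[lsmul ℝ ℝ, μ] F) x := by
        rw [convolution_lsmul_swap]
        simp only [smul_eq_mul, mul_comm]

lemma HasWeakLineDeriv.integral_mul_fderiv_mul_convolution (hf : HasWeakLineDeriv f F v μ)
    (hg : HasWeakLineDeriv g G v μ) {ρ φ : E → ℝ}
    (hρ : ContDiff ℝ ∞ ρ) (hρc : HasCompactSupport ρ)
    (hφ : ContDiff ℝ ∞ φ) (hφc : HasCompactSupport φ) :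
    ∫ x, f x * fderiv ℝ φ x v * (ρ ⋆[lsmul ℝ ℝ, μ] g) x ∂μ =
      -(∫ x, F x * φ x * (ρ ⋆[lsmul ℝ ℝ, μ] g) x ∂μ) -
        ∫ x, f x * φ x * (ρ ⋆[lsmul ℝ ℝ, μ] G) x ∂μ := by
  set u := ρ ⋆[lsmul ℝ ℝ, μ] g with hu_def
  have hu : ContDiff ℝ ∞ u := hρc.contDiff_convolution_left _ hρ hg.locallyIntegrable
  have hU : Continuous (ρ ⋆[lsmul ℝ ℝ, μ] G) :=
    hρc.continuous_convolution_left _ hρ.continuous hg.locallyIntegrable_deriv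
  have hprod (x : E) : fderiv ℝ (fun x ↦ φ x * u x) x v =
      φ x * (ρ ⋆[lsmul ℝ ℝ, μ] G) x + fderiv ℝ φ x v * u x := by
    rw [fderiv_fun_mul (hφ.differentiable (by simp) x) (hu.differentiable (by simp) x),
      ← hg.fderiv_convolution hρ hρc]
    simp [mul_comm, hu_def]
  have htest := hf.integral_mul_fderiv (hφ.mul hu) hφc.mul_right
  have hint₁ : Integrable (fun x ↦ f x * (φ x * (ρ ⋆[lsmul ℝ ℝ, μ] G) x)) μ :=
    hf.locallyIntegrable.integrable_smul_right_of_hasCompactSupport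
      (hφ.continuous.mul hU) hφc.mul_right
  have hint₂ : Integrable (fun x ↦ f x * (fderiv ℝ φ x v * u x)) μ :=
    hf.locallyIntegrable.integrable_smul_right_of_hasCompactSupport
      (((hφ.continuous_fderiv (by simp)).clm_apply continuous_const).mul hu.continuous)
      (hφc.fderiv_apply ℝ v).mul_right
  simp only [hprod, mul_add, integral_add hint₁ hint₂] at htest
  simp only [mul_assoc]
  linarith

/-- The test functions `φ * (ρ ⋆ g)`, with `ρ` an approximate identity, replace the inadmissible
test function `φ * g`. -/
theorem HasWeakLineDeriv.mul (hf : HasWeakLineDeriv f F v μ) (hg : HasWeakLineDeriv g G v μ)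
    (hf2 : MemLp f 2 μ) (hF2 : MemLp F 2 μ) (hg2 : MemLp g 2 μ) (hG2 : MemLp G 2 μ) :
    HasWeakLineDeriv (fun x ↦ f x * g x) (fun x ↦ F x * g x + f x * G x) v μ where
  locallyIntegrable := (hf2.integrable_mul hg2).locallyIntegrable
  locallyIntegrable_deriv :=
    ((hF2.integrable_mul hg2).add (hf2.integrable_mul hG2)).locallyIntegrable
  integral_mul_fderiv {φ} hφ hφc := by
    let b (n : ℕ) : ContDiffBump (0 : E) :=
      ⟨1 / ((n : ℝ) + 1) / 2, 1 / ((n : ℝ) + 1), by positivity, half_lt_self (by positivity)⟩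
    have hb : Tendsto (fun n ↦ (b n).rOut) atTop (𝓝 0) := tendsto_one_div_add_atTop_nhds_zero_nat
    have hφ' : Continuous fun x ↦ fderiv ℝ φ x v :=
      (hφ.continuous_fderiv (by simp)).clm_apply continuous_const
    have hmemLp {h ψ : E → ℝ} (hh : MemLp h 2 μ) (hψ : Continuous ψ) (hψc : HasCompactSupport ψ) :
        MemLp (fun x ↦ h x * ψ x) 2 μ :=
      (hψ.memLp_of_hasCompactSupport hψc (p := ⊤)).mul hh
    have hlim := tendsto_nhds_unique
      (tendsto_integral_mul_normed_convolution hb (hmemLp hf2 hφ' (hφc.fderiv_apply ℝ v)) hg2)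
      (((tendsto_integral_mul_normed_convolution hb (hmemLp hF2 hφ.continuous hφc) hg2).neg.sub
        (tendsto_integral_mul_normed_convolution hb (hmemLp hf2 hφ.continuous hφc) hG2)).congr
        fun n ↦ (hf.integral_mul_fderiv_mul_convolution hg (b n).contDiff_normed
          (b n).hasCompactSupport_normed hφ hφc).symm)
    have hint₁ : Integrable (fun x ↦ F x * φ x * g x) μ :=
      (hmemLp hF2 hφ.continuous hφc).integrable_mul hg2
    have hint₂ : Integrable (fun x ↦ f x * φ x * G x) μ :=
      (hmemLp hf2 hφ.continuous hφc).integrable_mul hG2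
    calc ∫ x, f x * g x * fderiv ℝ φ x v ∂μ
        = ∫ x, f x * fderiv ℝ φ x v * g x ∂μ := by simp only [mul_right_comm]
      _ = -(∫ x, F x * φ x * g x ∂μ) - ∫ x, f x * φ x * G x ∂μ := hlim
      _ = -∫ x, (F x * φ x * g x + f x * φ x * G x) ∂μ := by
        rw [integral_add hint₁ hint₂, neg_add']
      _ = -∫ x, (F x * g x + f x * G x) * φ x ∂μ := by
        simp only [add_mul, mul_right_comm]

end WeakLineDeriv

section Cutoff

variable {E : Type*} [NormedAddCommGroup E] [NormedSpace ℝ E] [MeasurableSpace E]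
  {μ : Measure E}

lemma tendsto_integral_mul_comp_smul [OpensMeasurableSpace E] {h θ : E → ℝ} (hh : Integrable h μ)
    (hθ : Continuous θ) (hθc : HasCompactSupport θ) :
    Tendsto (fun r : ℝ ↦ ∫ x, h x * θ (r • x) ∂μ) (𝓝 0) (𝓝 ((∫ x, h x ∂μ) * θ 0)) := by
  obtain ⟨C, hC⟩ := hθc.exists_bound_of_continuous hθ
  have hcont : Continuous fun r : ℝ ↦ ∫ x, h x * θ (r • x) ∂μ := by
    refine continuous_of_dominated (bound := fun x ↦ ‖h x‖ * C) (fun r ↦ ?_)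
      (fun r ↦ .of_forall fun x ↦ ?_) (hh.norm.mul_const C) (.of_forall fun x ↦ by fun_prop)
    · have hθr : Continuous fun x ↦ θ (r • x) := by fun_prop
      exact hh.aestronglyMeasurable.mul hθr.aestronglyMeasurable
    · rw [norm_mul]
      gcongr
      exact hC _
  simpa [integral_mul_const] using hcont.tendsto 0

variable [FiniteDimensional ℝ E]

lemma aestronglyMeasurable_of_forall_mul_contDiff {F : E → ℝ}
    (hF : ∀ φ : E → ℝ, ContDiff ℝ ∞ φ → HasCompactSupport φ →
      AEStronglyMeasurable (fun x ↦ F x * φ x) μ) :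
    AEStronglyMeasurable F μ := by
  let b : ContDiffBump (0 : E) := default
  have hr : Tendsto (fun n : ℕ ↦ 1 / ((n : ℝ) + 1)) atTop (𝓝 0) :=
    tendsto_one_div_add_atTop_nhds_zero_nat
  refine aestronglyMeasurable_of_tendsto_ae atTop
    (f := fun (n : ℕ) x ↦ F x * b ((1 / ((n : ℝ) + 1)) • x)) (fun n ↦ ?_) (.of_forall fun x ↦ ?_)
  · exact hF _ (b.contDiff.comp (contDiff_const_smul _))
      (b.hasCompactSupport.comp_smul (by positivity))
  · have hb := (b.continuous.tendsto _).comp (hr.smul_const x)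
    rw [zero_smul, b.one_of_mem_closedBall (Metric.mem_closedBall_self b.rIn_pos.le)] at hb
    simpa using hb.const_mul (F x)

variable [OpensMeasurableSpace E]

/-- Failure of integrability turns the right-hand sides of the defining identity into the junk
value `0` for a test function `ψ` and for all its perturbations, hence for all test functions. -/
lemma hasWeakLineDeriv_zero_of_not_aestronglyMeasurable {f F : E → ℝ} {v : E}
    (hf : LocallyIntegrable f μ) (hF : ¬AEStronglyMeasurable F μ)
    (hfF : ∀ φ : E → ℝ, ContDiff ℝ ∞ φ → HasCompactSupport φ →
      ∫ x, f x * fderiv ℝ φ x v ∂μ = -∫ x, F x * φ x ∂μ) :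
    HasWeakLineDeriv f 0 v μ where
  locallyIntegrable := hf
  locallyIntegrable_deriv := locallyIntegrable_zero
  integral_mul_fderiv {φ} hφ hφc := by
    have hint {φ : E → ℝ} (hφ : ContDiff ℝ ∞ φ) (hφc : HasCompactSupport φ) :
        Integrable (fun x ↦ f x * fderiv ℝ φ x v) μ :=
      integrable_mul_fderiv_of_hasCompactSupport hf hφ hφc
    have hjunk {φ : E → ℝ} (hφ : ContDiff ℝ ∞ φ) (hφc : HasCompactSupport φ)
        (hFφ : ¬AEStronglyMeasurable (fun x ↦ F x * φ x) μ) :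
        ∫ x, f x * fderiv ℝ φ x v ∂μ = 0 := by
      rw [hfF φ hφ hφc, integral_non_aestronglyMeasurable hFφ, neg_zero]
    simp only [Pi.zero_apply, zero_mul, integral_zero, neg_zero]
    by_cases hFφ : AEStronglyMeasurable (fun x ↦ F x * φ x) μ
    · obtain ⟨ψ, hψ, hψc, hFψ⟩ : ∃ ψ : E → ℝ, ContDiff ℝ ∞ ψ ∧ HasCompactSupport ψ ∧
          ¬AEStronglyMeasurable (fun x ↦ F x * ψ x) μ := by
        by_contra! h
        exact hF (aestronglyMeasurable_of_forall_mul_contDiff h)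
      have hFψφ : ¬AEStronglyMeasurable (fun x ↦ F x * (ψ x + φ x)) μ := fun h ↦
        hFψ ((h.sub hFφ).congr (.of_forall fun x ↦ by simp [mul_add]))
      have hadd (x : E) : f x * fderiv ℝ (fun x ↦ ψ x + φ x) x v =
          f x * fderiv ℝ ψ x v + f x * fderiv ℝ φ x v := by
        rw [fderiv_fun_add (hψ.differentiable (by simp) x) (hφ.differentiable (by simp) x),
          add_apply, mul_add]
      have hsum := hjunk (hψ.add hφ) (hψc.add hφc) hFψφ
      simpa only [hadd, integral_add (hint hψ hψc) (hint hφ hφc), hjunk hψ hψc hFψ, zero_add]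
        using hsum
    · exact hjunk hφ hφc hFφ

end Cutoff

section GaussianWeight

lemma memLp_two_of_integrable_exp_mul_sq {E : Type*} [NormedAddCommGroup E] [MeasurableSpace E]
    {μ : Measure E} {a : ℝ} (ha : 0 ≤ a) {f : E → ℝ} (hf : AEStronglyMeasurable f μ)
    (hfw : Integrable (fun x ↦ Real.exp (a * ‖x‖ ^ 2) * f x ^ 2) μ) : MemLp f 2 μ := by
  refine (memLp_two_iff_integrable_sq hf).2 (hfw.mono' (hf.pow 2) (.of_forall fun x ↦ ?_))
  rw [Real.norm_of_nonneg (sq_nonneg _)]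
  exact le_mul_of_one_le_left (sq_nonneg _) (Real.one_le_exp (by positivity))

variable {E : Type*} [NormedAddCommGroup E] [InnerProductSpace ℝ E]

lemma fderiv_mul_exp_mul_norm_sq_mul_inner (a : ℝ) (v : E) {χ : E → ℝ} {x : E}
    (hχ : DifferentiableAt ℝ χ x) :
    fderiv ℝ (fun y ↦ χ y * (Real.exp (a * ‖y‖ ^ 2) * ⟪y, v⟫)) x v =
      Real.exp (a * ‖x‖ ^ 2) *
        ((‖v‖ ^ 2 + 2 * a * ⟪x, v⟫ ^ 2) * χ x + ⟪x, v⟫ * fderiv ℝ χ x v) := by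
  have hexp := ((hasStrictFDerivAt_norm_sq x).hasFDerivAt.const_mul a).exp
  have hinner : HasFDerivAt (fun y : E ↦ ⟪y, v⟫) _ x :=
    (hasFDerivAt_id x).inner ℝ (hasFDerivAt_const v x)
  have h : HasFDerivAt (fun y ↦ χ y * (Real.exp (a * ‖y‖ ^ 2) * ⟪y, v⟫)) _ x :=
    hχ.hasFDerivAt.mul (hexp.mul hinner)
  rw [h.fderiv]
  simp only [id_eq, smul_add, add_apply, smul_apply, comp_apply, ContinuousLinearMap.prod_apply,
    id_apply, zero_apply, fderivInnerCLM_apply, inner_zero_right, inner_self_eq_norm_sq_to_K,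
    Real.ringHom_apply, zero_add, smul_eq_mul, coe_innerSL_apply, nsmul_eq_mul, Nat.cast_ofNat]
  ring

variable [MeasurableSpace E] [FiniteDimensional ℝ E] [BorelSpace E]
  {μ : Measure E} [μ.IsAddHaarMeasure] {f F χ : E → ℝ} {v : E}

lemma HasWeakLineDeriv.integral_exp_mul_sq_mul_cutoff_le (hf : HasWeakLineDeriv f F v μ)
    (hf2 : MemLp f 2 μ) (hF2 : MemLp F 2 μ) (a : ℝ) (hχ : ContDiff ℝ ∞ χ)
    (hχc : HasCompactSupport χ) (hχ0 : ∀ x, 0 ≤ χ x) :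
    2 * a * ∫ x, Real.exp (a * ‖x‖ ^ 2) * f x ^ 2 *
        (‖v‖ ^ 2 * χ x + ⟪x, v⟫ * fderiv ℝ χ x v) ∂μ ≤
      ∫ x, Real.exp (a * ‖x‖ ^ 2) * F x ^ 2 * χ x ∂μ := by
  set w : E → ℝ := fun x ↦ Real.exp (a * ‖x‖ ^ 2)
  set φ : E → ℝ := fun x ↦ χ x * (w x * ⟪x, v⟫)
  have hw : ContDiff ℝ ∞ w := (contDiff_const.mul (contDiff_norm_sq ℝ)).exp
  have hwC : Continuous w := hw.continuous
  have hφ : ContDiff ℝ ∞ φ := hχ.mul (hw.mul (contDiff_id.inner ℝ contDiff_const))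
  have hχ' : Continuous fun x ↦ fderiv ℝ χ x v :=
    (hχ.continuous_fderiv (by simp)).clm_apply continuous_const
  have hff := hf.mul hf hf2 hF2 hf2 hF2
  have hcross := hff.integrable_mul_fderiv_add hφ hχc.mul_right
  have hleft : Integrable
      (fun x ↦ f x * f x * (w x * (‖v‖ ^ 2 * χ x + ⟪x, v⟫ * fderiv ℝ χ x v))) μ := by
    have h₁ : HasCompactSupport fun x ↦ ‖v‖ ^ 2 * χ x := hχc.mul_left
    have h₂ : HasCompactSupport fun x ↦ ⟪x, v⟫ * fderiv ℝ χ x v := (hχc.fderiv_apply ℝ v).mul_left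
    exact hff.locallyIntegrable.integrable_smul_right_of_hasCompactSupport (by fun_prop)
      (h₁.add h₂).mul_left
  have hright : Integrable (fun x ↦ F x * F x * (w x * χ x)) μ :=
    (hF2.integrable_mul hF2).locallyIntegrable.integrable_smul_right_of_hasCompactSupport
      (hwC.mul hχ.continuous) hχc.mul_left
  calc 2 * a * ∫ x, w x * f x ^ 2 * (‖v‖ ^ 2 * χ x + ⟪x, v⟫ * fderiv ℝ χ x v) ∂μ
      = ∫ x, 2 * a * (f x * f x * (w x * (‖v‖ ^ 2 * χ x + ⟪x, v⟫ * fderiv ℝ χ x v)) -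
          (f x * f x * fderiv ℝ φ x v + (F x * f x + f x * F x) * φ x)) ∂μ := by
        rw [integral_const_mul, integral_sub hleft hcross,
          hff.integral_mul_fderiv_add_eq_zero hφ hχc.mul_right, sub_zero]
        simp only [pow_two, mul_assoc, mul_left_comm]
    _ ≤ ∫ x, w x * F x ^ 2 * χ x ∂μ := by
        refine integral_mono ((hleft.sub hcross).const_mul _)
          (hright.congr (.of_forall fun x ↦ by ring)) fun x ↦ ?_
        have hsquare : 0 ≤ χ x * w x * (F x + 2 * a * ⟪x, v⟫ * f x) ^ 2 :=
          mul_nonneg (mul_nonneg (hχ0 x) (Real.exp_pos _).le) (sq_nonneg _)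
        rw [fderiv_mul_exp_mul_norm_sq_mul_inner a v (hχ.differentiable (by simp) x)]
        linarith

theorem HasWeakLineDeriv.integral_exp_mul_sq_le (hf : HasWeakLineDeriv f F v μ) {a : ℝ}
    (ha : 0 ≤ a) (hfw : Integrable (fun x ↦ Real.exp (a * ‖x‖ ^ 2) * f x ^ 2) μ)
    (hFw : Integrable (fun x ↦ Real.exp (a * ‖x‖ ^ 2) * F x ^ 2) μ) :
    2 * a * ‖v‖ ^ 2 * ∫ x, Real.exp (a * ‖x‖ ^ 2) * f x ^ 2 ∂μ ≤
      ∫ x, Real.exp (a * ‖x‖ ^ 2) * F x ^ 2 ∂μ := by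
  have hf2 := memLp_two_of_integrable_exp_mul_sq ha hf.locallyIntegrable.aestronglyMeasurable hfw
  have hF2 :=
    memLp_two_of_integrable_exp_mul_sq ha hf.locallyIntegrable_deriv.aestronglyMeasurable hFw
  let b : ContDiffBump (0 : E) := default
  let θ : E → ℝ := fun z ↦ ‖v‖ ^ 2 * b z + ⟪z, v⟫ * fderiv ℝ b z v
  have hb' : Continuous fun z ↦ fderiv ℝ b z v :=
    (b.contDiff.continuous_fderiv one_ne_zero).clm_apply continuous_const
  have hbC : Continuous b := b.continuous
  have hθ : Continuous θ := by fun_prop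
  have hθc : HasCompactSupport θ := by
    have h₁ : HasCompactSupport fun z ↦ ‖v‖ ^ 2 * b z := b.hasCompactSupport.mul_left
    exact h₁.add (b.hasCompactSupport.fderiv_apply ℝ v).mul_left
  have hb0 : b 0 = 1 := b.one_of_mem_closedBall (Metric.mem_closedBall_self b.rIn_pos.le)
  have hθ0 : θ 0 = ‖v‖ ^ 2 := by simp [θ, hb0]
  have hθ_smul (r : ℝ) (x : E) : θ (r • x) =
      ‖v‖ ^ 2 * b (r • x) + ⟪x, v⟫ * fderiv ℝ (fun y ↦ b (r • y)) x v := by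
    simp only [θ, fderiv_comp_smul, real_inner_smul_left, smul_apply, smul_eq_mul]
    ring
  have hcutoff (r : ℝ) (hr : r ≠ 0) :
      2 * a * ∫ x, Real.exp (a * ‖x‖ ^ 2) * f x ^ 2 * θ (r • x) ∂μ ≤
        ∫ x, Real.exp (a * ‖x‖ ^ 2) * F x ^ 2 * b (r • x) ∂μ := by
    simp only [hθ_smul]
    exact hf.integral_exp_mul_sq_mul_cutoff_le hf2 hF2 a (b.contDiff.comp (contDiff_const_smul r))
      (b.hasCompactSupport.comp_smul hr) fun x ↦ b.nonneg
  have hleft := (tendsto_integral_mul_comp_smul hfw hθ hθc).const_mul (2 * a)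
  have hright := tendsto_integral_mul_comp_smul hFw hbC b.hasCompactSupport
  rw [hθ0, mul_comm _ (‖v‖ ^ 2), ← mul_assoc] at hleft
  rw [hb0, mul_one] at hright
  exact le_of_tendsto_of_tendsto (b := 𝓝[≠] (0 : ℝ)) (hleft.mono_left nhdsWithin_le_nhds)
    (hright.mono_left nhdsWithin_le_nhds) (eventually_mem_nhdsWithin.mono hcutoff)

end GaussianWeight

section EuclideanSpace

variable {N : ℕ} {f : EuclideanSpace ℝ (Fin N) → ℝ}
  {g : EuclideanSpace ℝ (Fin N) → EuclideanSpace ℝ (Fin N)} {a : ℝ}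

lemma HasWeakGradient.hasWeakLineDeriv (hfg : HasWeakGradient f g) {i : Fin N}
    (hgi : LocallyIntegrable (fun y ↦ g y i)) :
    HasWeakLineDeriv f (fun y ↦ g y i) (EuclideanSpace.single i 1) volume where
  locallyIntegrable := hfg.1
  locallyIntegrable_deriv := hgi
  integral_mul_fderiv hφ hφc := hfg.2 _ hφ hφc i

lemma integrable_exp_mul_sq_apply {i : Fin N}
    (hgi : AEStronglyMeasurable (fun y ↦ g y i))
    (hg : Integrable (fun y ↦ Real.exp (a * ‖y‖ ^ 2) * ‖g y‖ ^ 2)) :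
    Integrable (fun y ↦ Real.exp (a * ‖y‖ ^ 2) * g y i ^ 2) := by
  have hexp : Continuous fun y : EuclideanSpace ℝ (Fin N) ↦ Real.exp (a * ‖y‖ ^ 2) := by fun_prop
  refine hg.mono' (hexp.aestronglyMeasurable.mul (hgi.pow 2)) (.of_forall fun y ↦ ?_)
  have hcoord : g y i ^ 2 ≤ ‖g y‖ ^ 2 := by
    simpa only [Real.norm_eq_abs, sq_abs] using
      pow_le_pow_left₀ (norm_nonneg _) (PiLp.norm_apply_le (g y) i) 2
  rw [Real.norm_of_nonneg (by positivity)]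
  gcongr

lemma HasWeakGradient.integral_exp_mul_sq_le_of_aestronglyMeasurable (hfg : HasWeakGradient f g)
    (ha : 0 ≤ a) (hgm : ∀ i, AEStronglyMeasurable (fun y ↦ g y i))
    (hf : Integrable (fun y ↦ Real.exp (a * ‖y‖ ^ 2) * f y ^ 2))
    (hg : Integrable (fun y ↦ Real.exp (a * ‖y‖ ^ 2) * ‖g y‖ ^ 2)) :
    2 * a * N * ∫ y, Real.exp (a * ‖y‖ ^ 2) * f y ^ 2 ≤
      ∫ y, Real.exp (a * ‖y‖ ^ 2) * ‖g y‖ ^ 2 := by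
  have hint (i : Fin N) := integrable_exp_mul_sq_apply (hgm i) hg
  have hline (i : Fin N) : 2 * a * ∫ y, Real.exp (a * ‖y‖ ^ 2) * f y ^ 2 ≤
      ∫ y, Real.exp (a * ‖y‖ ^ 2) * g y i ^ 2 := by
    have hgi := (memLp_two_of_integrable_exp_mul_sq ha (hgm i) (hint i)).locallyIntegrable
      one_le_two
    simpa using (hfg.hasWeakLineDeriv hgi).integral_exp_mul_sq_le ha hf (hint i)
  calc 2 * a * N * ∫ y, Real.exp (a * ‖y‖ ^ 2) * f y ^ 2
      = ∑ _ : Fin N, 2 * a * ∫ y, Real.exp (a * ‖y‖ ^ 2) * f y ^ 2 := by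
        rw [Fin.sum_const, nsmul_eq_mul]
        ring
    _ ≤ ∑ i, ∫ y, Real.exp (a * ‖y‖ ^ 2) * g y i ^ 2 := Finset.sum_le_sum fun i _ ↦ hline i
    _ = ∫ y, Real.exp (a * ‖y‖ ^ 2) * ‖g y‖ ^ 2 := by
        rw [← integral_finsetSum _ fun i _ ↦ hint i]
        simp only [EuclideanSpace.real_norm_sq_eq, Finset.mul_sum]

lemma HasWeakGradient.integral_exp_mul_sq_nonpos_of_not_aestronglyMeasurable
    (hfg : HasWeakGradient f g) (ha : 0 ≤ a) {i : Fin N}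
    (hgi : ¬AEStronglyMeasurable (fun y ↦ g y i))
    (hf : Integrable (fun y ↦ Real.exp (a * ‖y‖ ^ 2) * f y ^ 2)) :
    2 * a * ∫ y, Real.exp (a * ‖y‖ ^ 2) * f y ^ 2 ≤ 0 := by
  have hf0 := hasWeakLineDeriv_zero_of_not_aestronglyMeasurable hfg.1 hgi
    fun φ hφ hφc ↦ hfg.2 φ hφ hφc i
  simpa using hf0.integral_exp_mul_sq_le ha hf (by simp)

theorem stmt_6_general (ha : 0 ≤ a) (hfg : HasWeakGradient f g)
    (hf : Integrable (fun y ↦ Real.exp (a * ‖y‖ ^ 2) * f y ^ 2))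
    (hg : Integrable (fun y ↦ Real.exp (a * ‖y‖ ^ 2) * ‖g y‖ ^ 2)) :
    2 * a * N * ∫ y, Real.exp (a * ‖y‖ ^ 2) * f y ^ 2 ≤
      ∫ y, Real.exp (a * ‖y‖ ^ 2) * ‖g y‖ ^ 2 := by
  by_cases hgm : ∀ i, AEStronglyMeasurable (fun y ↦ g y i)
  · exact hfg.integral_exp_mul_sq_le_of_aestronglyMeasurable ha hgm hf hg
  · push Not at hgm
    obtain ⟨i, hgi⟩ := hgm
    calc 2 * a * N * ∫ y, Real.exp (a * ‖y‖ ^ 2) * f y ^ 2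
        = N * (2 * a * ∫ y, Real.exp (a * ‖y‖ ^ 2) * f y ^ 2) := by ring
      _ ≤ 0 := mul_nonpos_of_nonneg_of_nonpos N.cast_nonneg
        (hfg.integral_exp_mul_sq_nonpos_of_not_aestronglyMeasurable ha hgi hf)
      _ ≤ ∫ y, Real.exp (a * ‖y‖ ^ 2) * ‖g y‖ ^ 2 := integral_nonneg fun y ↦ by positivity

end EuclideanSpace

/-- Weighted Poincaré inequality with sharp constant `N/2`. -/
theorem stmt_6 (N : ℕ) (hN : 1 ≤ N)
    (f : EuclideanSpace ℝ (Fin N) → ℝ)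
    (g : EuclideanSpace ℝ (Fin N) → EuclideanSpace ℝ (Fin N))
    (hfg : HasWeakGradient f g)
    (hf2 : Integrable (fun y : EuclideanSpace ℝ (Fin N) =>
      Real.exp (‖y‖ ^ 2 / 4) * (f y) ^ 2))
    (hg2 : Integrable (fun y : EuclideanSpace ℝ (Fin N) =>
      Real.exp (‖y‖ ^ 2 / 4) * ‖g y‖ ^ 2)) :
    (N / 2 : ℝ) * ∫ y : EuclideanSpace ℝ (Fin N), Real.exp (‖y‖ ^ 2 / 4) * (f y) ^ 2
      ≤ ∫ y : EuclideanSpace ℝ (Fin N), Real.exp (‖y‖ ^ 2 / 4) * ‖g y‖ ^ 2 := by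
  simp only [div_eq_inv_mul] at hf2 hg2 ⊢
  convert stmt_6_general (by norm_num : (0 : ℝ) ≤ 4⁻¹) hfg hf2 hg2 using 2
  ring
end

section
/- Compactness of the embedding H¹(K) ↪ L²(K): Let N ≥ 1 and K(y) = exp(|y|²/4). Let (f_m)_{m∈ℕ} be a sequence of locally integrable functions f_m : ℝ^N → ℝ, each with a weak gradient g_m : ℝ^N → ℝ^N, such that sup_m ( ∫_{ℝ^N} K(y)|f_m(y)|² dy + ∫_{ℝ^N} K(y)|g_m(y)|² dy ) < ∞. Then there exist a subsequence (f_{m_k}) and a function f with ∫_{ℝ^N} K(y)|f(y)|² dy < ∞ such that ∫_{ℝ^N} K(y)|f_{m_k}(y) − f(y)|² dy → 0 as k → ∞. -/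
open MeasureTheory Filter ENNReal

/-!
Since `∂ₑK = ⟪e, y⟫ K / 2`, integrating the divergence `∂ₑ(⟪e, y⟫ K u²)` gives the Hardy inequality
`∫ K ⟪e, y⟫² u² ≤ 16 ∫ K (∂ₑu)²`. Hence a bounded sequence in `H¹(K)` has bounded moments
`∫ K |y|² f²` and loses no mass at infinity in `L²(K)`, so it is enough to find a subsequence that
is Cauchy in `L²` of every ball, where `K` is bounded. As `‖f(· + v) - f‖₂ ≤ ‖∂ᵥf‖₂`, the sequence
is equicontinuous under translations: averages over small balls approximate it uniformly in `L²`,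
and these averages converge along a subsequence by weak compactness. Mollification carries both
inequalities from smooth functions to weakly differentiable ones.
-/

open Topology Metric
open scoped Convolution NNReal RealInnerProductSpace

/-! ### Integral means in `L^p` -/

section IntegralMeans

variable {α β V : Type*} [MeasurableSpace α] [MeasurableSpace β] [NormedAddCommGroup V]
  [NormedSpace ℝ V] {μ : Measure α} {ν : Measure β} {p : ℝ≥0∞}

lemma enorm_integral_le_eLpNorm [IsProbabilityMeasure ν] (hp : 1 ≤ p) (F : β → V) :
    ‖∫ b, F b ∂ν‖ₑ ≤ eLpNorm F p ν := by
  by_cases hF : AEStronglyMeasurable F ν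
  · calc ‖∫ b, F b ∂ν‖ₑ ≤ eLpNorm F 1 ν := by
          rw [eLpNorm_one_eq_lintegral_enorm]
          exact enorm_integral_le_lintegral_enorm F
      _ ≤ eLpNorm F p ν := eLpNorm_le_eLpNorm_of_exponent_le hp hF
  · simp [integral_non_aestronglyMeasurable hF]

lemma eLpNorm_integral_le_of_ae_le [SFinite μ] [IsProbabilityMeasure ν] (hp : 1 ≤ p)
    (hp_top : p ≠ ⊤) {G : α → β → V}
    (hG : AEStronglyMeasurable (Function.uncurry G) (μ.prod ν)) {C : ℝ≥0∞}
    (hC : ∀ᵐ b ∂ν, eLpNorm (fun a => G a b) p μ ≤ C) :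
    eLpNorm (fun a => ∫ b, G a b ∂ν) p μ ≤ C := by
  lift p to ℝ≥0 using hp_top
  have hp_pos : 0 < (p : ℝ) := zero_lt_one.trans_le (by exact_mod_cast hp)
  have hp_ne : p ≠ 0 := by exact_mod_cast hp_pos.ne'
  rw [← ENNReal.rpow_le_rpow_iff hp_pos, eLpNorm_nnreal_pow_eq_lintegral hp_ne]
  calc ∫⁻ a, ‖∫ b, G a b ∂ν‖ₑ ^ (p : ℝ) ∂μ
      ≤ ∫⁻ a, ∫⁻ b, ‖G a b‖ₑ ^ (p : ℝ) ∂ν ∂μ := by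
        refine lintegral_mono fun a => ?_
        rw [← eLpNorm_nnreal_pow_eq_lintegral hp_ne]
        gcongr
        exact enorm_integral_le_eLpNorm hp (G a)
    _ = ∫⁻ b, ∫⁻ a, ‖G a b‖ₑ ^ (p : ℝ) ∂μ ∂ν :=
        lintegral_lintegral_swap (hG.enorm.pow_const _)
    _ = ∫⁻ b, eLpNorm (fun a => G a b) p μ ^ (p : ℝ) ∂ν := by
        simp only [eLpNorm_nnreal_pow_eq_lintegral hp_ne]
    _ ≤ ∫⁻ _, C ^ (p : ℝ) ∂ν := by
        refine lintegral_mono_ae ?_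
        filter_upwards [hC] with b hb
        gcongr
    _ = C ^ (p : ℝ) := by simp

end IntegralMeans

lemma exists_tendsto_eLpNorm_sub_of_cauchy {α V : Type*} [MeasurableSpace α] {μ : Measure α}
    [NormedAddCommGroup V] [CompleteSpace V] {p : ℝ≥0∞} [Fact (1 ≤ p)] {F : ℕ → α → V}
    (hF : ∀ k, MemLp (F k) p μ)
    (hcauchy : Tendsto (fun mn : ℕ × ℕ => eLpNorm (F mn.1 - F mn.2) p μ) atTop (𝓝 0)) :
    ∃ f, MemLp f p μ ∧ Tendsto (fun k => eLpNorm (F k - f) p μ) atTop (𝓝 0) := by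
  have hseq : CauchySeq fun k => (hF k).toLp := by
    rw [Lp.cauchySeq_Lp_iff_cauchySeq_eLpNorm]
    refine hcauchy.congr fun mn => eLpNorm_congr_ae ?_
    exact (hF mn.1).coeFn_toLp.symm.sub (hF mn.2).coeFn_toLp.symm
  obtain ⟨f, hf⟩ := cauchySeq_tendsto_of_complete hseq
  refine ⟨f, Lp.memLp f, ?_⟩
  rw [Lp.tendsto_Lp_iff_tendsto_eLpNorm'] at hf
  exact hf.congr fun k => eLpNorm_congr_ae ((hF k).coeFn_toLp.sub .rfl)

/-! ### Local `L²` compactness from equicontinuity under translations -/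

lemma exists_strictMono_forall_tendsto_inner {H : Type*} [NormedAddCommGroup H]
    [InnerProductSpace ℝ H] [TopologicalSpace.SeparableSpace H] {u : ℕ → H} {C : ℝ}
    (hu : ∀ k, ‖u k‖ ≤ C) :
    ∃ φ : ℕ → ℕ, StrictMono φ ∧ ∀ v, ∃ l, Tendsto (fun k => ⟪u (φ k), v⟫) atTop (𝓝 l) := by
  obtain ⟨a, -, φ, hφ, ha⟩ := WeakDual.isSeqCompact_closedBall ℝ H 0 C
    (x := fun k => StrongDual.toWeakDual (innerSL ℝ (u k))) fun k => by
      rw [Set.mem_preimage, mem_closedBall_zero_iff]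
      exact (innerSL_apply_norm ℝ (u k)).trans_le (hu k)
  exact ⟨φ, hφ, fun v => ⟨a v, ((WeakDual.eval_continuous v).tendsto a).comp ha⟩⟩

lemma exists_strictMono_forall_tendsto_setIntegral {α : Type*} [MeasurableSpace α]
    {μ : Measure α} [IsSeparable μ] {F : ℕ → α → ℝ} {C : ℝ≥0∞} (hC : C ≠ ⊤)
    (hF : ∀ k, MemLp (F k) 2 μ) (hbdd : ∀ k, eLpNorm (F k) 2 μ ≤ C) :
    ∃ φ : ℕ → ℕ, StrictMono φ ∧ ∀ s, MeasurableSet s → μ s ≠ ⊤ →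
      ∃ l, Tendsto (fun k => ∫ x in s, F (φ k) x ∂μ) atTop (𝓝 l) := by
  have : Fact ((2 : ℝ≥0∞) ≠ ⊤) := ⟨by simp⟩
  obtain ⟨φ, hφ, hlim⟩ := exists_strictMono_forall_tendsto_inner
    (u := fun k => (hF k).toLp) (C := C.toReal) fun k => by
      rw [Lp.norm_toLp]
      exact ENNReal.toReal_mono hC (hbdd k)
  refine ⟨φ, hφ, fun s hs hμs => ?_⟩
  obtain ⟨l, hl⟩ := hlim (indicatorConstLp 2 hs hμs 1)
  refine ⟨l, hl.congr fun k => ?_⟩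
  rw [real_inner_comm, L2.inner_indicatorConstLp_one]
  exact integral_congr_ae (ae_restrict_of_ae (hF (φ k)).coeFn_toLp)

section BallAverage

lemma aestronglyMeasurable_comp_add_prod {G V : Type*} [AddGroup G] [MeasurableSpace G]
    [MeasurableAdd₂ G] {μ ν : Measure G} [SFinite μ] [SFinite ν] [μ.IsAddRightInvariant]
    [TopologicalSpace V] {f : G → V} (hf : AEStronglyMeasurable f μ) :
    AEStronglyMeasurable (fun z : G × G => f (z.1 + z.2)) (μ.prod ν) :=
  hf.comp_quasiMeasurePreserving <|
    Measure.quasiMeasurePreserving_fst.comp (measurePreserving_add_prod μ ν).quasiMeasurePreserving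

lemma average_ball_eq_average_ball_zero {E V : Type*} [NormedAddCommGroup E]
    [MeasurableSpace E] [BorelSpace E] {μ : Measure E} [μ.IsAddLeftInvariant]
    [NormedAddCommGroup V] [NormedSpace ℝ V] (f : E → V) (x : E) (r : ℝ) :
    ⨍ y in ball x r, f y ∂μ = ⨍ v in ball 0 r, f (x + v) ∂μ := by
  have hpre : (fun v => x + v) ⁻¹' ball x r = ball 0 r := by ext; simp
  rw [setAverage_eq, setAverage_eq, ← (measurePreserving_add_left μ x).setIntegral_preimage_emb
    (measurableEmbedding_addLeft x), hpre, Measure.real, Measure.real,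
    ← measure_preimage_add μ x (ball x r), hpre]

variable {E V : Type*} [NormedAddCommGroup E] [NormedSpace ℝ E] [FiniteDimensional ℝ E]
  [MeasurableSpace E] [BorelSpace E] {μ : Measure E} [μ.IsAddHaarMeasure]
  [NormedAddCommGroup V] [NormedSpace ℝ V] {p : ℝ≥0∞} {r : ℝ}

omit [BorelSpace E] in
lemma isProbabilityMeasure_normalized_restrict_ball (x : E) (hr : 0 < r) :
    IsProbabilityMeasure ((μ.restrict (ball x r) Set.univ)⁻¹ • μ.restrict (ball x r)) := by
  have : NeZero (μ.restrict (ball x r)) :=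
    ⟨(Measure.restrict_eq_zero).not.2 (measure_ball_pos μ x hr).ne'⟩
  have : IsFiniteMeasure (μ.restrict (ball x r)) := ⟨by simp [measure_ball_lt_top]⟩
  infer_instance

lemma enorm_average_ball_le (hp : 1 ≤ p) (hp_top : p ≠ ⊤) (hr : 0 < r) (f : E → V) (x : E) :
    ‖⨍ y in ball x r, f y ∂μ‖ₑ ≤ (μ (ball 0 r))⁻¹ ^ (1 / p).toReal * eLpNorm f p μ := by
  have := isProbabilityMeasure_normalized_restrict_ball (μ := μ) x hr
  refine (enorm_integral_le_eLpNorm hp f).trans ?_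
  rw [eLpNorm_smul_measure_of_ne_top hp_top, Measure.restrict_apply_univ,
    Measure.addHaar_ball_center, smul_eq_mul]
  gcongr
  exact Measure.restrict_le_self

lemma aestronglyMeasurable_average_ball {f : E → V} (hf : AEStronglyMeasurable f μ) (r : ℝ) :
    AEStronglyMeasurable (fun x => ⨍ y in ball x r, f y ∂μ) μ := by
  simp_rw [average_ball_eq_average_ball_zero f, setAverage_eq]
  exact ((aestronglyMeasurable_comp_add_prod
    (ν := μ.restrict (ball 0 r)) hf).integral_prod_right').const_smul _

lemma eLpNorm_average_ball_sub_le [CompleteSpace V] (hp : 1 ≤ p) (hp_top : p ≠ ⊤) (hr : 0 < r)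
    {f : E → V} (hf : MemLp f p μ) {C : ℝ≥0∞}
    (hC : ∀ v ∈ ball 0 r, eLpNorm (fun x => f (x + v) - f x) p μ ≤ C) :
    eLpNorm (fun x => (⨍ y in ball x r, f y ∂μ) - f x) p μ ≤ C := by
  have := isProbabilityMeasure_normalized_restrict_ball (μ := μ) 0 hr
  set ν := (μ.restrict (ball 0 r) Set.univ)⁻¹ • μ.restrict (ball 0 r)
  have hmean : ∀ x, (⨍ y in ball x r, f y ∂μ) - f x = ∫ v, (f (x + v) - f x) ∂ν := by
    intro x
    have hint : Integrable (fun v => f (x + v)) ν :=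
      (((hf.comp_measurePreserving (measurePreserving_add_left μ x)).restrict _).smul_measure
        (by simp [(measure_ball_pos μ (0 : E) hr).ne'])).integrable hp
    rw [integral_sub hint (integrable_const _), integral_const, probReal_univ, one_smul,
      average_ball_eq_average_ball_zero, average]
  simp only [hmean]
  refine eLpNorm_integral_le_of_ae_le hp hp_top ?_ ?_
  · exact (aestronglyMeasurable_comp_add_prod hf.1).sub hf.1.comp_fst
  · refine Measure.ae_smul_measure ?_ _
    filter_upwards [ae_restrict_mem measurableSet_ball] with v hv using hC v hv

end BallAverage

lemma tendsto_eLpNorm_sub_of_enorm_le {α V : Type*} [MeasurableSpace α] {μ : Measure α}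
    [IsFiniteMeasure μ] [NormedAddCommGroup V] {p : ℝ≥0∞} (hp : 1 ≤ p) (hp_top : p ≠ ⊤)
    {F : ℕ → α → V} {f : α → V} {C : ℝ≥0∞} (hC : C ≠ ⊤) (hF : ∀ k, AEStronglyMeasurable (F k) μ)
    (hbdd : ∀ k a, ‖F k a‖ₑ ≤ C) (hlim : ∀ a, Tendsto (fun k => F k a) atTop (𝓝 (f a))) :
    Tendsto (fun k => eLpNorm (F k - f) p μ) atTop (𝓝 0) := by
  have hf : ∀ a, ‖f a‖ₑ ≤ C := fun a =>
    le_of_tendsto (hlim a).enorm (Eventually.of_forall fun k => hbdd k a)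
  have hf_meas := aestronglyMeasurable_of_tendsto_ae atTop hF (ae_of_all _ hlim)
  refine tendsto_Lp_finite_of_tendsto_ae hp hp_top hF (.of_bound hf_meas C.toReal ?_) ?_
    (ae_of_all _ hlim)
  · exact ae_of_all _ fun a => by
      simpa only [toReal_enorm] using ENNReal.toReal_mono hC (hf a)
  · refine unifIntegrable_of hp hp_top hF fun ε _ => ⟨C.toNNReal + 1, fun k => ?_⟩
    have hempty : {a | C.toNNReal + 1 ≤ ‖F k a‖₊} = ∅ := by
      refine Set.eq_empty_of_forall_notMem fun a ha => ?_
      have hle : ‖F k a‖₊ ≤ C.toNNReal := ENNReal.le_toNNReal_of_coe_le (hbdd k a) hC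
      exact (lt_add_one C.toNNReal).not_ge (le_trans ha hle)
    simp [hempty]

lemma tendsto_eLpNorm_sub_prod_of_eventually_le {α V : Type*} [MeasurableSpace α] {μ : Measure α}
    [NormedAddCommGroup V] {p : ℝ≥0∞} (hp : 1 ≤ p) {F : ℕ → α → V}
    (hF : ∀ k, AEStronglyMeasurable (F k) μ)
    (happrox : ∀ ε ≠ 0, ∃ a, AEStronglyMeasurable a μ ∧
      ∀ᶠ k in atTop, eLpNorm (F k - a) p μ ≤ ε) :
    Tendsto (fun mn : ℕ × ℕ => eLpNorm (F mn.1 - F mn.2) p μ) atTop (𝓝 0) := by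
  refine ENNReal.tendsto_nhds_zero.2 fun ε hε => ?_
  obtain ⟨a, ha, hclose⟩ := happrox (ε / 2) (ENNReal.half_pos hε.ne').ne'
  rw [← prod_atTop_atTop_eq]
  filter_upwards [hclose.prod_mk hclose] with ⟨m, n⟩ ⟨hm, hn⟩
  calc eLpNorm (F m - F n) p μ = eLpNorm ((F m - a) - (F n - a)) p μ := by
        rw [sub_sub_sub_cancel_right]
    _ ≤ eLpNorm (F m - a) p μ + eLpNorm (F n - a) p μ :=
        eLpNorm_sub_le ((hF m).sub ha) ((hF n).sub ha) hp
    _ ≤ ε / 2 + ε / 2 := add_le_add hm hn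
    _ = ε := ENNReal.add_halves ε

section LocalCompactness

variable {E : Type*} [NormedAddCommGroup E] [NormedSpace ℝ E] [FiniteDimensional ℝ E]
  [MeasurableSpace E] [BorelSpace E] {μ : Measure E} [μ.IsAddHaarMeasure]

lemma exists_tendsto_eLpNorm_average_ball_sub {V : Type*} [NormedAddCommGroup V]
    [NormedSpace ℝ V] {p : ℝ≥0∞} (hp : 1 ≤ p) (hp_top : p ≠ ⊤) {F : ℕ → E → V} {C : ℝ≥0∞}
    (hC : C ≠ ⊤) (hF : ∀ k, AEStronglyMeasurable (F k) μ) (hbdd : ∀ k, eLpNorm (F k) p μ ≤ C)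
    {r : ℝ} (hr : 0 < r)
    (hlim : ∀ x, ∃ l, Tendsto (fun k => ∫ y in ball x r, F k y ∂μ) atTop (𝓝 l)) (R : ℝ) :
    ∃ a, AEStronglyMeasurable a (μ.restrict (closedBall 0 R)) ∧
      Tendsto (fun k => eLpNorm ((fun x => ⨍ y in ball x r, F k y ∂μ) - a) p
        (μ.restrict (closedBall 0 R))) atTop (𝓝 0) := by
  have : IsFiniteMeasure (μ.restrict (closedBall (0 : E) R)) :=
    ⟨by simp [measure_closedBall_lt_top]⟩
  have hmeas : ∀ k, AEStronglyMeasurable (fun x => ⨍ y in ball x r, F k y ∂μ)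
      (μ.restrict (closedBall 0 R)) := fun k =>
    (aestronglyMeasurable_average_ball (hF k) r).restrict
  choose l hl using hlim
  have havg : ∀ x, Tendsto (fun k => ⨍ y in ball x r, F k y ∂μ) atTop
      (𝓝 ((μ.real (ball x r))⁻¹ • l x)) := fun x => by
    simpa only [setAverage_eq] using (hl x).const_smul _
  refine ⟨fun x => (μ.real (ball x r))⁻¹ • l x,
    aestronglyMeasurable_of_tendsto_ae atTop hmeas (ae_of_all _ havg),
    tendsto_eLpNorm_sub_of_enorm_le hp hp_top
      (C := (μ (ball 0 r))⁻¹ ^ (1 / p).toReal * C) ?_ hmeas (fun k x => ?_) havg⟩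
  · have := (measure_ball_pos μ (0 : E) hr).ne'
    finiteness
  · exact (enorm_average_ball_le hp hp_top hr _ x).trans (by gcongr; exact hbdd k)

theorem exists_strictMono_forall_tendsto_eLpNorm_restrict_closedBall {F : ℕ → E → ℝ} {C : ℝ≥0∞}
    (hC : C ≠ ⊤) (hF : ∀ k, MemLp (F k) 2 μ) (hbdd : ∀ k, eLpNorm (F k) 2 μ ≤ C)
    (hequi : ∀ ε ≠ 0, ∀ᶠ v in 𝓝 0, ∀ k, eLpNorm (fun x => F k (x + v) - F k x) 2 μ ≤ ε) :
    ∃ φ : ℕ → ℕ, StrictMono φ ∧ ∀ R, Tendsto (fun mn : ℕ × ℕ =>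
      eLpNorm (F (φ mn.1) - F (φ mn.2)) 2 (μ.restrict (closedBall 0 R))) atTop (𝓝 0) := by
  obtain ⟨φ, hφ, hlim⟩ := exists_strictMono_forall_tendsto_setIntegral hC hF hbdd
  refine ⟨φ, hφ, fun R => tendsto_eLpNorm_sub_prod_of_eventually_le one_le_two
    (F := fun k => F (φ k)) (fun k => (hF (φ k)).1.restrict) fun ε hε => ?_⟩
  have hε_half := ENNReal.half_pos hε
  obtain ⟨r, hr, hball⟩ := Metric.eventually_nhds_iff_ball.1 (hequi (ε / 2) hε_half.ne')
  obtain ⟨a, ha, hconv⟩ := exists_tendsto_eLpNorm_average_ball_sub one_le_two ofNat_ne_top hC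
    (fun k => (hF (φ k)).1) (fun k => hbdd (φ k)) hr
    (fun x => hlim _ measurableSet_ball measure_ball_lt_top.ne) R
  refine ⟨a, ha, ?_⟩
  filter_upwards [ENNReal.tendsto_nhds_zero.1 hconv (ε / 2) hε_half] with k hk
  set A : E → ℝ := fun x => ⨍ y in ball x r, F (φ k) y ∂μ
  have hA := (aestronglyMeasurable_average_ball (hF (φ k)).1 r).restrict (s := closedBall 0 R)
  calc eLpNorm (F (φ k) - a) 2 (μ.restrict (closedBall 0 R))
      = eLpNorm ((A - a) - (A - F (φ k))) 2 (μ.restrict (closedBall 0 R)) := by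
        congr 1
        abel
    _ ≤ eLpNorm (A - a) 2 (μ.restrict (closedBall 0 R))
          + eLpNorm (A - F (φ k)) 2 (μ.restrict (closedBall 0 R)) :=
        eLpNorm_sub_le (hA.sub ha) (hA.sub (hF (φ k)).1.restrict) one_le_two
    _ ≤ ε / 2 + ε / 2 := by
        gcongr
        exact (eLpNorm_mono_measure _ Measure.restrict_le_self).trans <|
          eLpNorm_average_ball_sub_le one_le_two ofNat_ne_top hr (hF (φ k))
            fun v hv => hball v hv _
    _ = ε := ENNReal.add_halves ε

end LocalCompactness

/-! ### Tightness -/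

lemma eLpNorm_le_restrict_add_restrict_compl {α V : Type*} [MeasurableSpace α] {μ : Measure α}
    [NormedAddCommGroup V] {p : ℝ≥0∞} (hp : 1 ≤ p) {f : α → V} (hf : AEStronglyMeasurable f μ)
    {s : Set α} (hs : MeasurableSet s) :
    eLpNorm f p μ ≤ eLpNorm f p (μ.restrict s) + eLpNorm f p (μ.restrict sᶜ) := by
  rw [← eLpNorm_indicator_eq_eLpNorm_restrict hs,
    ← eLpNorm_indicator_eq_eLpNorm_restrict hs.compl]
  nth_rewrite 1 [← Set.indicator_self_add_compl s f]
  exact eLpNorm_add_le (hf.indicator hs) (hf.indicator hs.compl) hp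

section Tightness

variable {E V : Type*} [NormedAddCommGroup E] [MeasurableSpace E] [OpensMeasurableSpace E]
  {μ : Measure E} [NormedAddCommGroup V] [NormedSpace ℝ V] {p : ℝ≥0∞}

lemma eLpNorm_restrict_compl_closedBall_le {R : ℝ} (hR : 0 < R) (f : E → V) :
    eLpNorm f p (μ.restrict (closedBall 0 R)ᶜ)
      ≤ ENNReal.ofReal R⁻¹ * eLpNorm (fun x => ‖x‖ • f x) p μ := by
  refine (eLpNorm_le_mul_eLpNorm_of_ae_le_mul (g := fun x => ‖x‖ • f x) ?_ p).trans
    (mul_le_mul_right (eLpNorm_mono_measure _ Measure.restrict_le_self) _)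
  filter_upwards [ae_restrict_mem measurableSet_closedBall.compl] with x hx
  have hx : R < ‖x‖ := by simpa using hx
  rw [norm_smul, norm_norm, ← mul_assoc]
  refine le_mul_of_one_le_left (norm_nonneg _) ?_
  rw [inv_mul_eq_div, one_le_div hR]
  exact hx.le

lemma tendsto_eLpNorm_sub_prod_of_tight (hp : 1 ≤ p) {F : ℕ → E → V} {C : ℝ≥0∞} (hC : C ≠ ⊤)
    (hF : ∀ k, AEStronglyMeasurable (F k) μ)
    (hmoment : ∀ k, eLpNorm (fun x => ‖x‖ • F k x) p μ ≤ C)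
    (hball : ∀ R, Tendsto (fun mn : ℕ × ℕ =>
      eLpNorm (F mn.1 - F mn.2) p (μ.restrict (closedBall 0 R))) atTop (𝓝 0)) :
    Tendsto (fun mn : ℕ × ℕ => eLpNorm (F mn.1 - F mn.2) p μ) atTop (𝓝 0) := by
  refine ENNReal.tendsto_nhds_zero.2 fun ε hε => ?_
  have hε_half := ENNReal.half_pos hε.ne'
  obtain ⟨R, hR, hRε⟩ : ∃ R : ℝ, 0 < R ∧ ENNReal.ofReal R⁻¹ * (C + C) ≤ ε / 2 := by
    have hlim : Tendsto (fun R : ℝ => ENNReal.ofReal R⁻¹ * (C + C)) atTop (𝓝 0) := by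
      simpa using ENNReal.Tendsto.mul_const (ENNReal.tendsto_ofReal tendsto_inv_atTop_zero)
        (Or.inr (add_ne_top.2 ⟨hC, hC⟩))
    exact ((eventually_gt_atTop 0).and (ENNReal.tendsto_nhds_zero.1 hlim _ hε_half)).exists
  have hnorm_smul : ∀ k, AEStronglyMeasurable (fun x => ‖x‖ • F k x) μ := fun k =>
    measurable_norm.aestronglyMeasurable.smul (hF k)
  filter_upwards [ENNReal.tendsto_nhds_zero.1 (hball R) _ hε_half] with ⟨m, n⟩ hmn
  have hmoment_sub : eLpNorm (fun x => ‖x‖ • (F m - F n) x) p μ ≤ C + C := by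
    simp only [Pi.sub_apply, smul_sub]
    exact (eLpNorm_sub_le (hnorm_smul m) (hnorm_smul n) hp).trans
      (add_le_add (hmoment m) (hmoment n))
  calc eLpNorm (F m - F n) p μ
      ≤ eLpNorm (F m - F n) p (μ.restrict (closedBall 0 R))
          + eLpNorm (F m - F n) p (μ.restrict (closedBall 0 R)ᶜ) :=
        eLpNorm_le_restrict_add_restrict_compl hp ((hF m).sub (hF n)) measurableSet_closedBall
    _ ≤ ε / 2 + ε / 2 := by
        gcongr
        exact (eLpNorm_restrict_compl_closedBall_le hR _).trans
          ((mul_le_mul_right hmoment_sub _).trans hRε)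
    _ = ε := ENNReal.add_halves ε

end Tightness

/-! ### Weak directional derivatives -/

section WeakLineDeriv

variable {E : Type*} [NormedAddCommGroup E] [NormedSpace ℝ E] [MeasurableSpace E]

/-- The locally integrable function `g` is the weak (distributional) derivative of the locally
integrable function `f` in the direction `v`. -/
structure HasWeakLineDeriv_s8 (f g : E → ℝ) (v : E) (μ : Measure E) : Prop where
  locallyIntegrable : LocallyIntegrable f μ
  locallyIntegrable_deriv : LocallyIntegrable g μ
  integral_mul_fderiv : ∀ φ : E → ℝ, ContDiff ℝ (⊤ : ℕ∞) φ → HasCompactSupport φ →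
    ∫ y, f y * fderiv ℝ φ y v ∂μ = -∫ y, g y * φ y ∂μ

variable [OpensMeasurableSpace E] {μ : Measure E} {f g : E → ℝ} {v : E}

lemma integrable_mul_fderiv_apply (hf : LocallyIntegrable f μ) {φ : E → ℝ}
    (hφ : ContDiff ℝ (⊤ : ℕ∞) φ) (hφ_supp : HasCompactSupport φ) (v : E) :
    Integrable (fun y => f y * fderiv ℝ φ y v) μ := by
  simpa only [smul_eq_mul, mul_comm] using hf.integrable_smul_left_of_hasCompactSupport
    ((hφ.continuous_fderiv (by simp)).clm_apply continuous_const) (hφ_supp.fderiv_apply ℝ v)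

lemma HasWeakLineDeriv_s8.sum {ι : Type*} {s : Finset ι} {c : ι → ℝ} {G : ι → E → ℝ} {e : ι → E}
    (hf : LocallyIntegrable f μ) (h : ∀ i ∈ s, HasWeakLineDeriv_s8 f (G i) (e i) μ) :
    HasWeakLineDeriv_s8 f (∑ i ∈ s, c i • G i) (∑ i ∈ s, c i • e i) μ where
  locallyIntegrable := hf
  locallyIntegrable_deriv := locallyIntegrable_finsetSum' s fun i hi =>
    (h i hi).locallyIntegrable_deriv.smul (c i)
  integral_mul_fderiv φ hφ hφ_supp := by
    have hGφ : ∀ i ∈ s, Integrable (fun y => G i y * φ y) μ := fun i hi => by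
      simpa only [smul_eq_mul, mul_comm] using
        (h i hi).locallyIntegrable_deriv.integrable_smul_left_of_hasCompactSupport
          hφ.continuous hφ_supp
    simp only [map_sum, map_smul, Finset.sum_apply, Pi.smul_apply, smul_eq_mul, Finset.mul_sum,
      Finset.sum_mul, mul_left_comm _ (c _), mul_assoc]
    rw [integral_finsetSum s fun i _ => (integrable_mul_fderiv_apply hf hφ hφ_supp _).const_mul _,
      integral_finsetSum s fun i hi => (hGφ i hi).const_mul _, ← Finset.sum_neg_distrib]
    refine Finset.sum_congr rfl fun i hi => ?_
    rw [integral_const_mul, integral_const_mul, (h i hi).integral_mul_fderiv φ hφ hφ_supp, mul_neg]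

lemma locallyIntegrable_of_forall_integrable_mul [FiniteDimensional ℝ E]
    (hg : ∀ φ : E → ℝ, ContDiff ℝ (⊤ : ℕ∞) φ → HasCompactSupport φ →
      Integrable (fun y => g y * φ y) μ) :
    LocallyIntegrable g μ := by
  intro x
  let b : ContDiffBump x := default
  refine ⟨closedBall x b.rIn, closedBall_mem_nhds x b.rIn_pos, ?_⟩
  refine (hg b b.contDiff b.hasCompactSupport).integrableOn.congr_fun (fun y hy => ?_)
    measurableSet_closedBall
  simp only [b.one_of_mem_closedBall hy, mul_one]

/- If `g * ψ` is not integrable for some test function `ψ`, the Bochner integral makes the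
right-hand side of `h` vanish at `ψ`, and at `φ + ψ` whenever `g * φ` is integrable; hence
`∫ f ∂ᵥφ = 0` for every `φ`. -/
lemma hasWeakLineDeriv_or_hasWeakLineDeriv_zero [FiniteDimensional ℝ E]
    (hf : LocallyIntegrable f μ)
    (h : ∀ φ : E → ℝ, ContDiff ℝ (⊤ : ℕ∞) φ → HasCompactSupport φ →
      ∫ y, f y * fderiv ℝ φ y v ∂μ = -∫ y, g y * φ y ∂μ) :
    HasWeakLineDeriv_s8 f g v μ ∨ HasWeakLineDeriv_s8 f 0 v μ := by
  by_cases hg : ∀ φ : E → ℝ, ContDiff ℝ (⊤ : ℕ∞) φ → HasCompactSupport φ →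
      Integrable (fun y => g y * φ y) μ
  · exact .inl ⟨hf, locallyIntegrable_of_forall_integrable_mul hg, h⟩
  push Not at hg
  obtain ⟨ψ, hψ, hψ_supp, hgψ⟩ := hg
  refine .inr ⟨hf, locallyIntegrable_zero, fun φ hφ hφ_supp => ?_⟩
  simp only [Pi.zero_apply, zero_mul, integral_zero, neg_zero]
  by_cases hgφ : Integrable (fun y => g y * φ y) μ
  · have hg_add : ¬ Integrable (fun y => g y * (φ + ψ) y) μ := fun hcontra =>
      hgψ <| (hcontra.sub hgφ).congr <| ae_of_all _ fun y => by
        simp only [Pi.sub_apply, Pi.add_apply]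
        ring
    have hfderiv : ∀ y, f y * fderiv ℝ (φ + ψ) y v
        = f y * fderiv ℝ φ y v + f y * fderiv ℝ ψ y v := fun y => by
      rw [fderiv_add (hφ.differentiable (by simp) y) (hψ.differentiable (by simp) y),
        add_apply, mul_add]
    have hsum := h (φ + ψ) (hφ.add hψ) (hφ_supp.add hψ_supp)
    rw [integral_undef hg_add, neg_zero] at hsum
    simp only [hfderiv] at hsum
    rwa [integral_add (integrable_mul_fderiv_apply hf hφ hφ_supp v)
      (integrable_mul_fderiv_apply hf hψ hψ_supp v), h ψ hψ hψ_supp, integral_undef hgψ, neg_zero,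
      add_zero] at hsum
  · rw [h φ hφ hφ_supp, integral_undef hgφ, neg_zero]

end WeakLineDeriv

/-! ### Mollification -/

section Mollify

variable {E : Type*} [NormedAddCommGroup E] [NormedSpace ℝ E] [FiniteDimensional ℝ E]
  [MeasurableSpace E] [BorelSpace E]

/-- The probability measure whose density with respect to `μ` is the normalized bump `b`. -/
noncomputable def bumpMeasure (b : ContDiffBump (0 : E)) (μ : Measure E) : Measure E :=
  μ.withDensity fun x => ENNReal.ofReal (b.normed μ x)

/-- The mollification of `f` by the normalized bump function `b`, i.e. their convolution. -/
noncomputable def mollify (b : ContDiffBump (0 : E)) (μ : Measure E) (f : E → ℝ) : E → ℝ :=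
  b.normed μ ⋆[ContinuousLinearMap.lsmul ℝ ℝ, μ] f

/-- A sequence of bump functions whose supports shrink to the origin. -/
noncomputable def mollifierSeq (E : Type*) [NormedAddCommGroup E] [NormedSpace ℝ E] (n : ℕ) :
    ContDiffBump (0 : E) where
  rIn := 1 / (2 * (n + 1))
  rOut := 1 / (n + 1)
  rIn_pos := by positivity
  rIn_lt_rOut := one_div_lt_one_div_of_lt (by positivity) (by linarith [n.cast_nonneg (α := ℝ)])

variable {μ : Measure E} {b : ContDiffBump (0 : E)} {f g : E → ℝ} {v : E} {p : ℝ≥0∞}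

lemma mollify_apply (x : E) : mollify b μ f x = ∫ h, f (x - h) ∂bumpMeasure b μ := by
  rw [bumpMeasure, integral_withDensity_eq_integral_toReal_smul
    b.continuous_normed.measurable.ennreal_ofReal (ae_of_all _ fun _ => ENNReal.ofReal_lt_top)]
  simp only [ENNReal.toReal_ofReal (b.nonneg_normed _)]
  rfl

variable [μ.IsAddHaarMeasure]

instance isProbabilityMeasure_bumpMeasure : IsProbabilityMeasure (bumpMeasure b μ) where
  measure_univ := by
    rw [bumpMeasure, withDensity_apply _ MeasurableSet.univ, Measure.restrict_univ,
      ← ofReal_integral_eq_lintegral_ofReal b.integrable_normed (ae_of_all _ b.nonneg_normed),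
      b.integral_normed, ENNReal.ofReal_one]

lemma ae_bumpMeasure_norm_le : ∀ᵐ h ∂bumpMeasure b μ, ‖h‖ ≤ b.rOut := by
  rw [bumpMeasure, ae_withDensity_iff b.continuous_normed.measurable.ennreal_ofReal]
  refine ae_of_all _ fun h hh => ?_
  have hsupp : h ∈ Function.support (b.normed μ) := fun h0 => hh (by rw [h0, ENNReal.ofReal_zero])
  rw [b.support_normed_eq] at hsupp
  exact (mem_ball_zero_iff.1 hsupp).le

lemma contDiff_mollify (hf : LocallyIntegrable f μ) : ContDiff ℝ 1 (mollify b μ f) :=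
  b.hasCompactSupport_normed.contDiff_convolution_left _ b.contDiff_normed hf

lemma ae_tendsto_mollify (hf : LocallyIntegrable f μ) :
    ∀ᵐ x ∂μ, Tendsto (fun n => mollify (mollifierSeq E n) μ f x) atTop (𝓝 (f x)) :=
  ContDiffBump.ae_convolution_tendsto_right_of_locallyIntegrable (K := 2)
    tendsto_one_div_add_atTop_nhds_zero_nat
    (Eventually.of_forall fun n => by simp only [mollifierSeq]; field_simp; rfl) hf

lemma HasWeakLineDeriv_s8.fderiv_mollify (h : HasWeakLineDeriv_s8 f g v μ) (x : E) :
    fderiv ℝ (mollify b μ f) x v = mollify b μ g x := by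
  set ρ := b.normed μ
  have hρ : ContDiff ℝ 1 ρ := b.contDiff_normed
  have hρ_supp : HasCompactSupport ρ := b.hasCompactSupport_normed
  have hfderiv : fderiv ℝ (mollify b μ f) x v = ∫ t, f (x - t) * fderiv ℝ ρ t v ∂μ := by
    have hint := (hρ_supp.fderiv ℝ).convolutionExists_left
      ((ContinuousLinearMap.lsmul ℝ ℝ).precompL E) (hρ.continuous_fderiv one_ne_zero)
      h.locallyIntegrable x
    rw [mollify, (hρ_supp.hasFDerivAt_convolution_left _ hρ h.locallyIntegrable x).fderiv,
      convolution_def, ContinuousLinearMap.integral_apply hint]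
    simp [mul_comm]
  have hreflect : ∀ t, fderiv ℝ (fun t => ρ (x - t)) t v = -fderiv ℝ ρ (x - t) v := fun t => by
    have hcomp : HasFDerivAt (fun t => ρ (x - t)) _ t :=
      (hρ.differentiable one_ne_zero (x - t)).hasFDerivAt.comp t ((hasFDerivAt_id t).const_sub x)
    simp [hcomp.fderiv]
  calc fderiv ℝ (mollify b μ f) x v
      = ∫ t, f t * fderiv ℝ ρ (x - t) v ∂μ := by
        rw [hfderiv, ← integral_sub_left_eq_self _ μ x]
        simp only [_root_.sub_sub_cancel]
    _ = -∫ t, f t * fderiv ℝ (fun t => ρ (x - t)) t v ∂μ := by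
        simp only [hreflect, mul_neg, integral_neg, neg_neg]
    _ = ∫ t, g t * ρ (x - t) ∂μ := by
        rw [h.integral_mul_fderiv (fun t => ρ (x - t))
          (b.contDiff_normed.comp (contDiff_const.sub contDiff_id))
          (hρ_supp.comp_homeomorph (Homeomorph.subLeft x)), neg_neg]
    _ = mollify b μ g x := by
        rw [← integral_sub_left_eq_self _ μ x, mollify, convolution_def]
        simp [mul_comm, ρ]

lemma eLpNorm_mollify_le_of_forall_norm_le (hp : 1 ≤ p) (hp_top : p ≠ ⊤) {lam : Measure E}
    [SFinite lam] (hlam : lam ≪ μ) (hf : AEStronglyMeasurable f μ) {C : ℝ≥0∞}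
    (hC : ∀ h, ‖h‖ ≤ b.rOut → eLpNorm (fun x => f (x - h)) p lam ≤ C) :
    eLpNorm (mollify b μ f) p lam ≤ C := by
  simp only [funext mollify_apply]
  refine eLpNorm_integral_le_of_ae_le hp hp_top ?_ (ae_bumpMeasure_norm_le.mono hC)
  exact (hf.comp_quasiMeasurePreserving
    (quasiMeasurePreserving_sub_of_right_invariant μ _)).mono_ac (hlam.prod .rfl)

lemma eLpNorm_mollify_le (hp : 1 ≤ p) (hp_top : p ≠ ⊤) (hf : AEStronglyMeasurable f μ) :
    eLpNorm (mollify b μ f) p μ ≤ eLpNorm f p μ :=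
  eLpNorm_mollify_le_of_forall_norm_le hp hp_top .rfl hf fun h _ =>
    (eLpNorm_comp_measurePreserving hf (measurePreserving_sub_right μ h)).le

end Mollify

/-! ### Translation estimate -/

section Translation

variable {E : Type*} [NormedAddCommGroup E] [NormedSpace ℝ E] [FiniteDimensional ℝ E]
  [MeasurableSpace E] [BorelSpace E] {μ : Measure E} [μ.IsAddHaarMeasure] {p : ℝ≥0∞}

lemma intervalIntegral_fderiv_apply_add_smul {V : Type*} [NormedAddCommGroup V] [NormedSpace ℝ V]
    [CompleteSpace V] {E : Type*} [NormedAddCommGroup E] [NormedSpace ℝ E] {u : E → V}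
    (hu : ContDiff ℝ 1 u) (x v : E) :
    ∫ t in (0 : ℝ)..1, fderiv ℝ u (x + t • v) v = u (x + v) - u x := by
  have hderiv : ∀ t ∈ Set.uIcc (0 : ℝ) 1,
      HasDerivAt (fun t : ℝ => u (x + t • v)) (fderiv ℝ u (x + t • v) v) t := fun t _ =>
    (hu.differentiable one_ne_zero _).hasFDerivAt.comp_hasDerivAt t <| by
      simpa using ((hasDerivAt_id t).smul_const v).const_add x
  have : Continuous (fderiv ℝ u) := hu.continuous_fderiv one_ne_zero
  rw [intervalIntegral.integral_eq_sub_of_hasDerivAt hderiv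
    (Continuous.intervalIntegrable (by fun_prop) _ _)]
  simp only [one_smul, zero_smul, add_zero]

lemma eLpNorm_comp_add_sub_le_of_contDiff {V : Type*} [NormedAddCommGroup V] [NormedSpace ℝ V]
    [CompleteSpace V] (hp : 1 ≤ p) (hp_top : p ≠ ⊤) {u : E → V} (hu : ContDiff ℝ 1 u) (v : E) :
    eLpNorm (fun x => u (x + v) - u x) p μ ≤ eLpNorm (fun x => fderiv ℝ u x v) p μ := by
  have hcont := hu.continuous_fderiv one_ne_zero
  have : IsProbabilityMeasure (volume.restrict (Set.Ioc (0 : ℝ) 1)) := ⟨by simp⟩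
  simp only [← intervalIntegral_fderiv_apply_add_smul hu,
    intervalIntegral.integral_of_le zero_le_one]
  refine eLpNorm_integral_le_of_ae_le hp hp_top ?_ (ae_of_all _ fun t => ?_)
  · have : Continuous (Function.uncurry fun (x : E) (t : ℝ) => fderiv ℝ u (x + t • v) v) := by
      fun_prop
    exact this.aestronglyMeasurable
  · exact (eLpNorm_comp_measurePreserving (g := fun x => fderiv ℝ u x v)
      (hcont.clm_apply continuous_const).aestronglyMeasurable
      (measurePreserving_add_right μ (t • v))).le

lemma HasWeakLineDeriv_s8.eLpNorm_comp_add_sub_le {f g : E → ℝ} {v : E}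
    (h : HasWeakLineDeriv_s8 f g v μ) (hp : 1 ≤ p) (hp_top : p ≠ ⊤) :
    eLpNorm (fun x => f (x + v) - f x) p μ ≤ eLpNorm g p μ := by
  let u n := mollify (mollifierSeq E n) μ f
  have hu : ∀ n, ContDiff ℝ 1 (u n) := fun n => contDiff_mollify h.locallyIntegrable
  have hbound : ∀ n, eLpNorm (fun x => u n (x + v) - u n x) p μ ≤ eLpNorm g p μ := fun n =>
    calc eLpNorm (fun x => u n (x + v) - u n x) p μ
        ≤ eLpNorm (fun x => fderiv ℝ (u n) x v) p μ :=
          eLpNorm_comp_add_sub_le_of_contDiff hp hp_top (hu n) v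
      _ = eLpNorm (mollify (mollifierSeq E n) μ g) p μ := by
          simp only [u, h.fderiv_mollify]
      _ ≤ eLpNorm g p μ :=
          eLpNorm_mollify_le hp hp_top h.locallyIntegrable_deriv.aestronglyMeasurable
  have hlim := ae_tendsto_mollify h.locallyIntegrable
  refine Lp.eLpNorm_le_of_ae_tendsto (u := atTop) (Eventually.of_forall hbound) (fun n => ?_) ?_
  · exact (((hu n).continuous.comp (continuous_add_const v)).sub
      (hu n).continuous).aestronglyMeasurable
  · filter_upwards [hlim, (measurePreserving_add_right μ v).quasiMeasurePreserving.ae hlim]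
      with x hx hxv using hxv.sub hx

end Translation

/-! ### The Gaussian weight -/

section GaussianWeight

variable {E : Type*} [NormedAddCommGroup E]

/-- The weight `K(y) = exp(|y|² / 4)`. -/
noncomputable def gaussianWeight (y : E) : ℝ :=
  Real.exp (‖y‖ ^ 2 / 4)

lemma gaussianWeight_pos (y : E) : 0 < gaussianWeight y :=
  Real.exp_pos _

lemma continuous_gaussianWeight : Continuous (gaussianWeight : E → ℝ) := by
  unfold gaussianWeight
  fun_prop

lemma gaussianWeight_le_exp_one_mul {x h : E} (hxh : ‖x‖ * ‖h‖ ≤ 2) :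
    gaussianWeight x ≤ Real.exp 1 * gaussianWeight (x - h) := by
  rw [gaussianWeight, gaussianWeight, ← Real.exp_add, Real.exp_le_exp]
  have htri : ‖x‖ - ‖h‖ ≤ ‖x - h‖ := norm_sub_norm_le x h
  rcases le_total ‖x‖ ‖h‖ with hle | hle
  · nlinarith [norm_nonneg x, norm_nonneg h, sq_nonneg ‖x - h‖]
  · nlinarith [sq_nonneg ‖h‖]

variable [MeasurableSpace E]

/-- The measure `K dμ`; the norm of `L²(K)` is the `L²` norm of `gaussianWeighted volume`. -/
noncomputable def gaussianWeighted (μ : Measure E) : Measure E :=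
  μ.withDensity fun y => ENNReal.ofReal (gaussianWeight y)

variable {μ : Measure E}

lemma gaussianWeighted_absolutelyContinuous : gaussianWeighted μ ≪ μ :=
  withDensity_absolutelyContinuous _ _

lemma le_gaussianWeighted : μ ≤ gaussianWeighted μ := by
  conv_lhs => rw [← withDensity_one (μ := μ)]
  refine withDensity_mono (ae_of_all _ fun y => ?_)
  exact ENNReal.one_le_ofReal.2 (Real.one_le_exp (by positivity))

instance sFinite_gaussianWeighted [SFinite μ] : SFinite (gaussianWeighted μ) := by
  unfold gaussianWeighted
  infer_instance

variable [OpensMeasurableSpace E]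

lemma measurable_ofReal_gaussianWeight :
    Measurable fun y : E => ENNReal.ofReal (gaussianWeight y) :=
  continuous_gaussianWeight.measurable.ennreal_ofReal

lemma restrict_closedBall_gaussianWeighted_le (R : ℝ) :
    (gaussianWeighted μ).restrict (closedBall 0 R)
      ≤ ENNReal.ofReal (Real.exp (R ^ 2 / 4)) • μ.restrict (closedBall 0 R) := by
  rw [gaussianWeighted, restrict_withDensity measurableSet_closedBall]
  calc (μ.restrict (closedBall 0 R)).withDensity (fun y => ENNReal.ofReal (gaussianWeight y))
      ≤ (μ.restrict (closedBall 0 R)).withDensity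
          (fun _ => ENNReal.ofReal (Real.exp (R ^ 2 / 4))) := by
        refine withDensity_mono ?_
        filter_upwards [ae_restrict_mem measurableSet_closedBall] with y hy
        rw [mem_closedBall_zero_iff] at hy
        unfold gaussianWeight
        gcongr
    _ = ENNReal.ofReal (Real.exp (R ^ 2 / 4)) • μ.restrict (closedBall 0 R) :=
        withDensity_const _

lemma tendsto_eLpNorm_restrict_closedBall_gaussianWeighted {ι V : Type*} [NormedAddCommGroup V]
    {p : ℝ≥0∞} (hp_top : p ≠ ⊤) {F : ι → E → V} {l : Filter ι} {R : ℝ}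
    (h : Tendsto (fun i => eLpNorm (F i) p (μ.restrict (closedBall 0 R))) l (𝓝 0)) :
    Tendsto (fun i => eLpNorm (F i) p ((gaussianWeighted μ).restrict (closedBall 0 R))) l
      (𝓝 0) := by
  set κ := ENNReal.ofReal (Real.exp (R ^ 2 / 4)) ^ (1 / p).toReal
  have hlim : Tendsto (fun i => κ * eLpNorm (F i) p (μ.restrict (closedBall 0 R))) l (𝓝 0) := by
    simpa only [mul_zero] using ENNReal.Tendsto.const_mul h (.inr (by finiteness))
  refine tendsto_of_tendsto_of_tendsto_of_le_of_le tendsto_const_nhds hlim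
    (fun _ => zero_le) fun i => ?_
  exact (eLpNorm_mono_measure _ (restrict_closedBall_gaussianWeighted_le R)).trans_eq
    (by rw [eLpNorm_smul_measure_of_ne_top hp_top, smul_eq_mul])

lemma eLpNorm_two_gaussianWeighted_sq {V : Type*} [NormedAddCommGroup V] (F : E → V) :
    eLpNorm F 2 (gaussianWeighted μ) ^ 2
      = ∫⁻ y, ENNReal.ofReal (gaussianWeight y * ‖F y‖ ^ 2) ∂μ := by
  have hsq := eLpNorm_nnreal_pow_eq_lintegral (f := F) (μ := gaussianWeighted μ) two_ne_zero
  simp only [NNReal.coe_ofNat, ENNReal.coe_ofNat, ENNReal.rpow_ofNat] at hsq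
  rw [hsq, gaussianWeighted, lintegral_withDensity_eq_lintegral_mul_non_measurable _
    measurable_ofReal_gaussianWeight (ae_of_all _ fun _ => ENNReal.ofReal_lt_top)]
  refine lintegral_congr fun y => ?_
  rw [ENNReal.ofReal_mul (gaussianWeight_pos y).le, ENNReal.ofReal_pow (norm_nonneg _),
    ofReal_norm, Pi.mul_apply]

lemma integrable_gaussianWeight_mul_sq [IsFiniteMeasureOnCompacts μ] {u : E → ℝ}
    (hu : Continuous u) (hu_supp : HasCompactSupport u) :
    Integrable (fun y => gaussianWeight y * u y ^ 2) μ :=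
  (continuous_gaussianWeight.mul (hu.pow 2)).integrable_of_hasCompactSupport
    (hu_supp.comp_left (zero_pow two_ne_zero)).mul_left

lemma eLpNorm_two_gaussianWeighted_sq_eq_ofReal_integral [IsFiniteMeasureOnCompacts μ]
    {u : E → ℝ} (hu : Continuous u) (hu_supp : HasCompactSupport u) :
    eLpNorm u 2 (gaussianWeighted μ) ^ 2
      = ENNReal.ofReal (∫ y, gaussianWeight y * u y ^ 2 ∂μ) := by
  rw [eLpNorm_two_gaussianWeighted_sq,
    ofReal_integral_eq_lintegral_ofReal (integrable_gaussianWeight_mul_sq hu hu_supp)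
      (ae_of_all _ fun y => mul_nonneg (gaussianWeight_pos y).le (sq_nonneg _))]
  simp only [Real.norm_eq_abs, sq_abs]

lemma map_sub_restrict_closedBall_gaussianWeighted_le [MeasurableAdd E]
    [μ.IsAddRightInvariant] {R : ℝ} {h : E} (hRh : R * ‖h‖ ≤ 2) :
    ((gaussianWeighted μ).restrict (closedBall 0 R)).map (· - h)
      ≤ ENNReal.ofReal (Real.exp 1) • gaussianWeighted μ := by
  refine Measure.le_intro fun s hs _ => ?_
  have hpre : MeasurableSet ((· - h) ⁻¹' s) := measurable_sub_const' h hs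
  rw [Measure.map_apply (measurable_sub_const' h) hs, Measure.restrict_apply hpre, gaussianWeighted,
    withDensity_apply _ (hpre.inter measurableSet_closedBall), Measure.smul_apply,
    withDensity_apply _ hs, smul_eq_mul]
  calc ∫⁻ x in (· - h) ⁻¹' s ∩ closedBall 0 R, ENNReal.ofReal (gaussianWeight x) ∂μ
      ≤ ∫⁻ x in (· - h) ⁻¹' s ∩ closedBall 0 R,
          ENNReal.ofReal (Real.exp 1) * ENNReal.ofReal (gaussianWeight (x - h)) ∂μ := by
        refine setLIntegral_mono' (hpre.inter measurableSet_closedBall) fun x hx => ?_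
        rw [← ENNReal.ofReal_mul (Real.exp_pos 1).le]
        refine ENNReal.ofReal_le_ofReal (gaussianWeight_le_exp_one_mul ?_)
        have hxR : ‖x‖ ≤ R := mem_closedBall_zero_iff.1 hx.2
        exact (mul_le_mul_of_nonneg_right hxR (norm_nonneg h)).trans hRh
    _ ≤ ∫⁻ x in (· - h) ⁻¹' s,
          ENNReal.ofReal (Real.exp 1) * ENNReal.ofReal (gaussianWeight (x - h)) ∂μ :=
        lintegral_mono_set Set.inter_subset_left
    _ = ENNReal.ofReal (Real.exp 1) * ∫⁻ x in s, ENNReal.ofReal (gaussianWeight x) ∂μ := by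
        rw [lintegral_const_mul' _ _ ENNReal.ofReal_ne_top,
          (measurePreserving_sub_right μ h).setLIntegral_comp_preimage hs
            measurable_ofReal_gaussianWeight]

end GaussianWeight

/-! ### A Hardy inequality for the Gaussian weight -/

section Hardy

lemma integral_fderiv_apply_eq_zero {E : Type*} [NormedAddCommGroup E] [NormedSpace ℝ E]
    [FiniteDimensional ℝ E] [MeasurableSpace E] [BorelSpace E] {μ : Measure E}
    [μ.IsAddHaarMeasure] {w : E → ℝ} (hw : ContDiff ℝ 1 w) (hw_supp : HasCompactSupport w)
    (e : E) :
    ∫ y, fderiv ℝ w y e ∂μ = 0 := by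
  have hint : Integrable (fun y => fderiv ℝ w y e) μ :=
    ((hw.continuous_fderiv one_ne_zero).clm_apply continuous_const).integrable_of_hasCompactSupport
      (hw_supp.fderiv_apply ℝ e)
  simpa using integral_mul_fderiv_eq_neg_fderiv_mul_of_integrable (μ := μ)
    (f := fun _ : E => (1 : ℝ)) (g := w) (v := e) (by simp) (by simpa using hint)
    (by simpa using hw.continuous.integrable_of_hasCompactSupport hw_supp)
    (fun _ _ => differentiableAt_const _) (fun y _ => hw.differentiable one_ne_zero y)

variable {E : Type*} [NormedAddCommGroup E] [InnerProductSpace ℝ E]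

lemma hasFDerivAt_gaussianWeight (y : E) :
    HasFDerivAt gaussianWeight ((gaussianWeight y / 2) • innerSL ℝ y) y := by
  convert! ((hasStrictFDerivAt_norm_sq y).hasFDerivAt.mul_const (1 / 4 : ℝ)).exp using 1
  · ext z
    simp [gaussianWeight, div_eq_mul_inv]
  · ext z
    simp [gaussianWeight, div_eq_mul_inv]
    ring

lemma fderiv_inner_mul_gaussianWeight_mul_sq {u : E → ℝ} {y : E} (hu : DifferentiableAt ℝ u y)
    (e : E) :
    fderiv ℝ (fun y => ⟪e, y⟫ * gaussianWeight y * u y ^ 2) y e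
      = gaussianWeight y * (‖e‖ ^ 2 * u y ^ 2 + (⟪e, y⟫ * u y) ^ 2 / 2
        + 2 * (⟪e, y⟫ * u y) * fderiv ℝ u y e) := by
  have hinner : HasFDerivAt (fun y => ⟪e, y⟫) (innerSL ℝ e) y := (innerSL ℝ e).hasFDerivAt
  have hderiv : HasFDerivAt (fun y => ⟪e, y⟫ * gaussianWeight y * u y ^ 2) _ y :=
    (hinner.mul (hasFDerivAt_gaussianWeight y)).mul (hu.hasFDerivAt.pow 2)
  rw [hderiv.fderiv]
  simp [real_inner_comm e y]
  ring

variable [FiniteDimensional ℝ E] [MeasurableSpace E] [BorelSpace E] {μ : Measure E}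
  [μ.IsAddHaarMeasure]

/- With `a = ⟪e, y⟫ u` and `d = ∂ₑu`, four times the divergence `∂ₑ(⟪e, y⟫ K u²)` plus
`K (16 d² - a²)` equals `K ((a + 4 d)² + 4 |e|² u²) ≥ 0`. -/
lemma integral_gaussianWeight_mul_sq_inner_mul_le {u : E → ℝ} (hu : ContDiff ℝ 1 u)
    (hu_supp : HasCompactSupport u) (e : E) :
    ∫ y, gaussianWeight y * (⟪e, y⟫ * u y) ^ 2 ∂μ
      ≤ 16 * ∫ y, gaussianWeight y * fderiv ℝ u y e ^ 2 ∂μ := by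
  let w : E → ℝ := fun y => ⟪e, y⟫ * gaussianWeight y * u y ^ 2
  have hw : ContDiff ℝ 1 w :=
    (((innerSL ℝ e).contDiff).mul (((contDiff_norm_sq ℝ).div_const 4).exp)).mul (hu.pow 2)
  have hw_supp : HasCompactSupport w := (hu_supp.comp_left (zero_pow two_ne_zero)).mul_left
  have hdiv := integral_fderiv_apply_eq_zero (μ := μ) hw hw_supp e
  have hint_div : Integrable (fun y => fderiv ℝ w y e) μ :=
    ((hw.continuous_fderiv one_ne_zero).clm_apply
      continuous_const).integrable_of_hasCompactSupport (hw_supp.fderiv_apply ℝ e)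
  have hint_inner : Integrable (fun y => gaussianWeight y * (⟪e, y⟫ * u y) ^ 2) μ :=
    integrable_gaussianWeight_mul_sq ((innerSL ℝ e).continuous.mul hu.continuous) hu_supp.mul_left
  have hint_fderiv : Integrable (fun y => gaussianWeight y * fderiv ℝ u y e ^ 2) μ :=
    integrable_gaussianWeight_mul_sq ((hu.continuous_fderiv one_ne_zero).clm_apply
      continuous_const) (hu_supp.fderiv_apply ℝ e)
  calc ∫ y, gaussianWeight y * (⟪e, y⟫ * u y) ^ 2 ∂μ
      ≤ ∫ y, (4 * fderiv ℝ w y e + 16 * (gaussianWeight y * fderiv ℝ u y e ^ 2)) ∂μ := by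
        refine integral_mono hint_inner ((hint_div.const_mul 4).add (hint_fderiv.const_mul 16))
          fun y => ?_
        have hsq : 0 ≤ gaussianWeight y
            * ((⟪e, y⟫ * u y + 4 * fderiv ℝ u y e) ^ 2 + 4 * (‖e‖ * u y) ^ 2) :=
          mul_nonneg (gaussianWeight_pos y).le (by positivity)
        simp only [w,
          fderiv_inner_mul_gaussianWeight_mul_sq (hu.differentiable one_ne_zero y)]
        linarith
    _ = 16 * ∫ y, gaussianWeight y * fderiv ℝ u y e ^ 2 ∂μ := by
        rw [integral_add (hint_div.const_mul 4) (hint_fderiv.const_mul 16), integral_const_mul,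
          integral_const_mul, hdiv, mul_zero, zero_add]

lemma eLpNorm_inner_mul_gaussianWeighted_le {u : E → ℝ} (hu : ContDiff ℝ 1 u)
    (hu_supp : HasCompactSupport u) (e : E) :
    eLpNorm (fun y => ⟪e, y⟫ * u y) 2 (gaussianWeighted μ)
      ≤ 4 * eLpNorm (fun y => fderiv ℝ u y e) 2 (gaussianWeighted μ) := by
  rw [← ENNReal.pow_le_pow_left_iff two_ne_zero, mul_pow,
    eLpNorm_two_gaussianWeighted_sq_eq_ofReal_integral (u := fun y => ⟪e, y⟫ * u y)
      ((innerSL ℝ e).continuous.mul hu.continuous) hu_supp.mul_left,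
    eLpNorm_two_gaussianWeighted_sq_eq_ofReal_integral
      ((hu.continuous_fderiv one_ne_zero).clm_apply continuous_const) (hu_supp.fderiv_apply ℝ e)]
  calc ENNReal.ofReal (∫ y, gaussianWeight y * (⟪e, y⟫ * u y) ^ 2 ∂μ)
      ≤ ENNReal.ofReal (16 * ∫ y, gaussianWeight y * fderiv ℝ u y e ^ 2 ∂μ) :=
        ENNReal.ofReal_le_ofReal (integral_gaussianWeight_mul_sq_inner_mul_le hu hu_supp e)
    _ = 4 ^ 2 * ENNReal.ofReal (∫ y, gaussianWeight y * fderiv ℝ u y e ^ 2 ∂μ) := by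
        rw [ENNReal.ofReal_mul (by norm_num)]
        norm_num

end Hardy

/-! ### Moment estimate for weakly differentiable functions -/

section Moment

lemma exists_cutoff_fderiv_le (E : Type*) [NormedAddCommGroup E] [NormedSpace ℝ E]
    [FiniteDimensional ℝ E] :
    ∃ B : ℝ≥0, ∀ R : ℝ, 1 ≤ R → ∃ χ : E → ℝ, ContDiff ℝ 1 χ ∧
      tsupport χ ⊆ closedBall 0 (2 * R) ∧ (∀ y ∈ closedBall 0 R, χ y = 1) ∧ (∀ y, ‖χ y‖ ≤ 1) ∧
      ∀ y, ‖fderiv ℝ χ y‖ ≤ B := by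
  let b : ContDiffBump (0 : E) := ⟨1, 2, one_pos, one_lt_two⟩
  have hb : ContDiff ℝ 1 b := b.contDiff
  obtain ⟨B, hB⟩ := (b.hasCompactSupport.fderiv ℝ).exists_bound_of_continuous
    (hb.continuous_fderiv one_ne_zero)
  refine ⟨B.toNNReal, fun R hR => ⟨fun y => b (R⁻¹ • y), hb.comp (contDiff_const_smul _), ?_,
    fun y hy => b.one_of_mem_closedBall ?_, fun y => ?_, fun y => ?_⟩⟩
  · refine closure_minimal (fun y hy => ?_) isClosed_closedBall
    have hsupp : R⁻¹ • y ∈ Function.support b := hy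
    rw [b.support_eq, mem_ball_zero_iff, norm_smul, norm_inv, Real.norm_of_nonneg (by positivity),
      inv_mul_lt_iff₀ (by positivity), mul_comm] at hsupp
    exact mem_closedBall_zero_iff.2 hsupp.le
  · rw [mem_closedBall_zero_iff] at hy ⊢
    rw [norm_smul, norm_inv, Real.norm_of_nonneg (by positivity), inv_mul_le_iff₀ (by positivity)]
    simpa [b] using hy
  · rw [Real.norm_of_nonneg b.nonneg]
    exact b.le_one
  · rw [fderiv_comp_smul, norm_smul, norm_inv, Real.norm_of_nonneg (by positivity)]
    calc R⁻¹ * ‖fderiv ℝ b (R⁻¹ • y)‖ ≤ 1 * ‖fderiv ℝ b (R⁻¹ • y)‖ := by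
          gcongr
          exact inv_le_one_of_one_le₀ hR
      _ ≤ B.toNNReal := by
          rw [one_mul]
          exact (hB _).trans (Real.le_coe_toNNReal B)

lemma eLpNorm_fderiv_mul_apply_le {E : Type*} [NormedAddCommGroup E] [NormedSpace ℝ E]
    [MeasurableSpace E] [OpensMeasurableSpace E] {μ : Measure E} {p : ℝ≥0∞} (hp : 1 ≤ p)
    {χ u : E → ℝ} (hχ : ContDiff ℝ 1 χ) (hu : ContDiff ℝ 1 u) {s : Set E} (hχ_supp : tsupport χ ⊆ s)
    (hχ_le : ∀ y, ‖χ y‖ ≤ 1) {B : ℝ≥0} (hB : ∀ y, ‖fderiv ℝ χ y‖ ≤ B) (e : E) :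
    eLpNorm (fun y => fderiv ℝ (fun z => χ z * u z) y e) p μ
      ≤ eLpNorm (fun y => fderiv ℝ u y e) p (μ.restrict s)
        + B * ‖e‖ₑ * eLpNorm u p (μ.restrict s) := by
  have hsupp : Function.support (fun y => fderiv ℝ (fun z => χ z * u z) y e) ⊆ s :=
    calc Function.support (fun y => fderiv ℝ (fun z => χ z * u z) y e)
        ⊆ tsupport (fun z => χ z * u z) :=
          (subset_tsupport _).trans (tsupport_fderiv_apply_subset ℝ e)
      _ ⊆ s := (closure_mono (Function.support_mul_subset_left χ u)).trans hχ_supp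
  have hleibniz : (fun y => fderiv ℝ (fun z => χ z * u z) y e)
      = (fun y => χ y * fderiv ℝ u y e) + fun y => u y * fderiv ℝ χ y e := by
    ext y
    rw [fderiv_fun_mul (hχ.differentiable one_ne_zero y) (hu.differentiable one_ne_zero y)]
    simp
  have hχ' : Continuous fun y => fderiv ℝ χ y e :=
    (hχ.continuous_fderiv one_ne_zero).clm_apply continuous_const
  have hu' : Continuous fun y => fderiv ℝ u y e :=
    (hu.continuous_fderiv one_ne_zero).clm_apply continuous_const
  rw [← eLpNorm_restrict_eq_of_support_subset hsupp, hleibniz]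
  refine (eLpNorm_add_le (hχ.continuous.mul hu').aestronglyMeasurable
    (hu.continuous.mul hχ').aestronglyMeasurable hp).trans (add_le_add ?_ ?_)
  · refine eLpNorm_mono fun y => ?_
    rw [Pi.mul_apply, norm_mul]
    exact mul_le_of_le_one_left (norm_nonneg _) (hχ_le y)
  · refine (eLpNorm_le_nnreal_smul_eLpNorm_of_ae_le_mul (g := u) (c := B * ‖e‖₊)
      (ae_of_all _ fun y => ?_) p).trans_eq ?_
    · rw [Pi.mul_apply, nnnorm_mul, mul_comm]
      gcongr
      exact (fderiv ℝ χ y).le_of_opNorm_le (hB y) e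
    · rw [ENNReal.smul_def, ENNReal.coe_mul, smul_eq_mul, enorm_eq_nnnorm]

variable {E : Type*} [NormedAddCommGroup E] [InnerProductSpace ℝ E] [FiniteDimensional ℝ E]
  [MeasurableSpace E] [BorelSpace E] {μ : Measure E} [μ.IsAddHaarMeasure] {p : ℝ≥0∞}

lemma eLpNorm_mollify_restrict_closedBall_gaussianWeighted_le (hp : 1 ≤ p) (hp_top : p ≠ ⊤)
    {b : ContDiffBump (0 : E)} {R : ℝ} (hR : 0 ≤ R) (hRb : R * b.rOut ≤ 2) {f : E → ℝ}
    (hf : AEStronglyMeasurable f μ) :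
    eLpNorm (mollify b μ f) p ((gaussianWeighted μ).restrict (closedBall 0 R))
      ≤ ENNReal.ofReal (Real.exp 1) ^ (1 / p).toReal * eLpNorm f p (gaussianWeighted μ) := by
  refine eLpNorm_mollify_le_of_forall_norm_le hp hp_top
    (Measure.absolutelyContinuous_restrict.trans gaussianWeighted_absolutelyContinuous) hf
    fun h hh => ?_
  have hle : ((gaussianWeighted μ).restrict (closedBall 0 R)).map (· - h)
      ≤ ENNReal.ofReal (Real.exp 1) • gaussianWeighted μ :=
    map_sub_restrict_closedBall_gaussianWeighted_le
      ((mul_le_mul_of_nonneg_left hh hR).trans hRb)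
  have hf_map : AEStronglyMeasurable f
      (((gaussianWeighted μ).restrict (closedBall 0 R)).map (· - h)) :=
    ((hf.mono_ac gaussianWeighted_absolutelyContinuous).smul_measure _).mono_measure hle
  calc eLpNorm (fun x => f (x - h)) p ((gaussianWeighted μ).restrict (closedBall 0 R))
      = eLpNorm f p (((gaussianWeighted μ).restrict (closedBall 0 R)).map (· - h)) :=
        (eLpNorm_map_measure hf_map (measurable_sub_const h).aemeasurable).symm
    _ ≤ eLpNorm f p (ENNReal.ofReal (Real.exp 1) • gaussianWeighted μ) :=
        eLpNorm_mono_measure f hle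
    _ = ENNReal.ofReal (Real.exp 1) ^ (1 / p).toReal * eLpNorm f p (gaussianWeighted μ) := by
        rw [eLpNorm_smul_measure_of_ne_top hp_top, smul_eq_mul]

lemma eLpNorm_inner_mul_cutoff_mollify_le {e : E} {f g : E → ℝ} (h : HasWeakLineDeriv_s8 f g e μ)
    {b : ContDiffBump (0 : E)} {R : ℝ} (hR : 0 ≤ R) (hRb : R * b.rOut ≤ 2) {χ : E → ℝ}
    (hχ : ContDiff ℝ 1 χ) (hχ_supp : tsupport χ ⊆ closedBall 0 R) (hχ_le : ∀ y, ‖χ y‖ ≤ 1)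
    {B : ℝ≥0} (hB : ∀ y, ‖fderiv ℝ χ y‖ ≤ B) :
    eLpNorm (fun y => ⟪e, y⟫ * (χ y * mollify b μ f y)) 2 (gaussianWeighted μ)
      ≤ 4 * (1 + B * ‖e‖ₑ) * ENNReal.ofReal (Real.exp 1) ^ (1 / 2 : ℝ≥0∞).toReal
        * (eLpNorm g 2 (gaussianWeighted μ) + eLpNorm f 2 (gaussianWeighted μ)) := by
  set κ := ENNReal.ofReal (Real.exp 1) ^ (1 / 2 : ℝ≥0∞).toReal
  set β : ℝ≥0∞ := B * ‖e‖ₑ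
  have hu : ContDiff ℝ 1 (mollify b μ f) := contDiff_mollify h.locallyIntegrable
  have hχ_compact : HasCompactSupport χ :=
    (isCompact_closedBall 0 R).of_isClosed_subset (isClosed_tsupport χ) hχ_supp
  calc eLpNorm (fun y => ⟪e, y⟫ * (χ y * mollify b μ f y)) 2 (gaussianWeighted μ)
      ≤ 4 * eLpNorm (fun y => fderiv ℝ (fun z => χ z * mollify b μ f z) y e) 2
          (gaussianWeighted μ) :=
        eLpNorm_inner_mul_gaussianWeighted_le (hχ.mul hu) hχ_compact.mul_right e
    _ ≤ 4 * (eLpNorm (mollify b μ g) 2 ((gaussianWeighted μ).restrict (closedBall 0 R))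
          + β * eLpNorm (mollify b μ f) 2 ((gaussianWeighted μ).restrict (closedBall 0 R))) := by
        gcongr
        simpa only [h.fderiv_mollify] using
          eLpNorm_fderiv_mul_apply_le one_le_two hχ hu hχ_supp hχ_le hB e
    _ ≤ 4 * (κ * eLpNorm g 2 (gaussianWeighted μ)
          + β * (κ * eLpNorm f 2 (gaussianWeighted μ))) := by
        gcongr
        · exact eLpNorm_mollify_restrict_closedBall_gaussianWeighted_le one_le_two ofNat_ne_top
            hR hRb h.locallyIntegrable_deriv.aestronglyMeasurable
        · exact eLpNorm_mollify_restrict_closedBall_gaussianWeighted_le one_le_two ofNat_ne_top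
            hR hRb h.locallyIntegrable.aestronglyMeasurable
    _ ≤ 4 * ((1 + β) * (κ * eLpNorm g 2 (gaussianWeighted μ))
          + (1 + β) * (κ * eLpNorm f 2 (gaussianWeighted μ))) := by
        gcongr 4 * (?_ + ?_ * _)
        · exact le_mul_of_one_le_left' le_self_add
        · exact le_add_self
    _ = 4 * (1 + β) * κ
          * (eLpNorm g 2 (gaussianWeighted μ) + eLpNorm f 2 (gaussianWeighted μ)) := by
        ring

lemma exists_forall_eLpNorm_inner_mul_gaussianWeighted_le (μ : Measure E) [μ.IsAddHaarMeasure]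
    (e : E) :
    ∃ c : ℝ≥0∞, c ≠ ⊤ ∧ ∀ f g : E → ℝ, HasWeakLineDeriv_s8 f g e μ →
      eLpNorm (fun y => ⟪e, y⟫ * f y) 2 (gaussianWeighted μ)
        ≤ c * (eLpNorm g 2 (gaussianWeighted μ) + eLpNorm f 2 (gaussianWeighted μ)) := by
  obtain ⟨B, hcutoff⟩ := exists_cutoff_fderiv_le E
  choose χ hχ hχ_supp hχ_one hχ_le hχ_deriv using
    fun n : ℕ => hcutoff (n + 1) (le_add_of_nonneg_left n.cast_nonneg)
  refine ⟨4 * (1 + B * ‖e‖ₑ) * ENNReal.ofReal (Real.exp 1) ^ (1 / 2 : ℝ≥0∞).toReal,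
    by finiteness, fun f g h => Lp.eLpNorm_le_of_ae_tendsto (u := atTop)
      (f := fun n y => ⟪e, y⟫ * (χ n y * mollify (mollifierSeq E n) μ f y))
      (Eventually.of_forall fun n => ?_) (fun n => ?_) ?_⟩
  · refine eLpNorm_inner_mul_cutoff_mollify_le h (by positivity) ?_ (hχ n) (hχ_supp n) (hχ_le n)
      (hχ_deriv n)
    simp only [mollifierSeq]
    field_simp
    rfl
  · exact ((innerSL ℝ e).continuous.mul ((hχ n).continuous.mul
      (contDiff_mollify h.locallyIntegrable).continuous)).aestronglyMeasurable
  · refine gaussianWeighted_absolutelyContinuous.ae_le ?_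
    filter_upwards [ae_tendsto_mollify h.locallyIntegrable] with y hy
    refine (hy.congr' ?_).const_mul _
    filter_upwards [eventually_ge_atTop ⌈‖y‖⌉₊] with n hn
    have hyn : ‖y‖ ≤ n + 1 := (Nat.ceil_le.1 hn).trans (le_add_of_nonneg_right zero_le_one)
    rw [hχ_one n y (mem_closedBall_zero_iff.2 hyn), one_mul]

end Moment

/-! ### Functions with a weak gradient -/

section WeakGradient

variable {N : ℕ} {f : EuclideanSpace ℝ (Fin N) → ℝ}
  {g : EuclideanSpace ℝ (Fin N) → EuclideanSpace ℝ (Fin N)}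

lemma sum_apply_smul_single (v : EuclideanSpace ℝ (Fin N)) :
    ∑ i, v i • EuclideanSpace.single i (1 : ℝ) = v := by
  simpa using (EuclideanSpace.basisFun (Fin N) ℝ).sum_repr v

lemma HasWeakGradient.exists_hasWeakLineDeriv (h : HasWeakGradient f g) :
    ∃ G : Fin N → EuclideanSpace ℝ (Fin N) → ℝ,
      (∀ i, HasWeakLineDeriv_s8 f (G i) (EuclideanSpace.single i 1) volume) ∧
      ∀ i y, ‖G i y‖ ≤ ‖g y‖ := by
  have hcomponent : ∀ i, ∃ G : EuclideanSpace ℝ (Fin N) → ℝ,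
      HasWeakLineDeriv_s8 f G (EuclideanSpace.single i 1) volume ∧ ∀ y, ‖G y‖ ≤ ‖g y‖ := fun i => by
    rcases hasWeakLineDeriv_or_hasWeakLineDeriv_zero h.1 fun φ hφ hφ_supp => h.2 φ hφ hφ_supp i
      with hG | hG
    · exact ⟨_, hG, fun y => PiLp.norm_apply_le (g y) i⟩
    · exact ⟨0, hG, fun y => by simp⟩
  choose G hG hG_le using hcomponent
  exact ⟨G, hG, hG_le⟩

lemma HasWeakGradient.eLpNorm_comp_add_sub_le (h : HasWeakGradient f g) {p : ℝ≥0∞} (hp : 1 ≤ p)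
    (hp_top : p ≠ ⊤) (v : EuclideanSpace ℝ (Fin N)) :
    eLpNorm (fun x => f (x + v) - f x) p volume ≤ N * ‖v‖ₑ * eLpNorm g p volume := by
  obtain ⟨G, hG, hG_le⟩ := h.exists_hasWeakLineDeriv
  have hv : HasWeakLineDeriv_s8 f (∑ i, v i • G i) v volume := by
    simpa only [sum_apply_smul_single] using
      HasWeakLineDeriv_s8.sum (s := Finset.univ) (c := v) h.1 fun i _ => hG i
  calc eLpNorm (fun x => f (x + v) - f x) p volume
      ≤ eLpNorm (∑ i, v i • G i) p volume := hv.eLpNorm_comp_add_sub_le hp hp_top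
    _ ≤ ∑ i, eLpNorm (v i • G i) p volume :=
        eLpNorm_sum_le (fun i _ =>
          (hG i).locallyIntegrable_deriv.aestronglyMeasurable.const_smul (v i)) hp
    _ ≤ ∑ _i : Fin N, ‖v‖ₑ * eLpNorm g p volume := by
        refine Finset.sum_le_sum fun i _ => ?_
        rw [eLpNorm_const_smul]
        exact mul_le_mul' (enorm_le_iff_norm_le.2 (PiLp.norm_apply_le v i))
          (eLpNorm_mono (hG_le i))
    _ = N * ‖v‖ₑ * eLpNorm g p volume := by
        simp [mul_assoc]

lemma exists_forall_eLpNorm_norm_smul_gaussianWeighted_le (N : ℕ) :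
    ∃ c : ℝ≥0∞, c ≠ ⊤ ∧ ∀ (f : EuclideanSpace ℝ (Fin N) → ℝ)
      (g : EuclideanSpace ℝ (Fin N) → EuclideanSpace ℝ (Fin N)), HasWeakGradient f g →
      eLpNorm (fun y => ‖y‖ • f y) 2 (gaussianWeighted volume)
        ≤ c * (eLpNorm g 2 (gaussianWeighted volume) + eLpNorm f 2 (gaussianWeighted volume)) := by
  choose c hc_top hc using fun i : Fin N =>
    exists_forall_eLpNorm_inner_mul_gaussianWeighted_le volume (EuclideanSpace.single i (1 : ℝ))
  refine ⟨∑ i, c i, ENNReal.sum_ne_top.2 fun i _ => hc_top i, fun f g h => ?_⟩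
  obtain ⟨G, hG, hG_le⟩ := h.exists_hasWeakLineDeriv
  have hf : AEStronglyMeasurable f (gaussianWeighted volume) :=
    h.1.aestronglyMeasurable.mono_ac gaussianWeighted_absolutelyContinuous
  calc eLpNorm (fun y => ‖y‖ • f y) 2 (gaussianWeighted volume)
      = eLpNorm (fun y => f y • y) 2 (gaussianWeighted volume) :=
        eLpNorm_congr_norm_ae (ae_of_all _ fun y => by simp [norm_smul, mul_comm])
    _ = eLpNorm (∑ i, fun y : EuclideanSpace ℝ (Fin N) =>
          (⟪EuclideanSpace.single i (1 : ℝ), y⟫ * f y) • EuclideanSpace.single i (1 : ℝ)) 2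
          (gaussianWeighted volume) := by
        congr 1
        ext1 y
        conv_lhs => enter [2]; rw [← sum_apply_smul_single y]
        simp [Finset.smul_sum, smul_smul, EuclideanSpace.inner_single_left, mul_comm]
    _ ≤ ∑ i, eLpNorm (fun y => ⟪EuclideanSpace.single i (1 : ℝ), y⟫ * f y) 2
          (gaussianWeighted volume) := by
        refine (eLpNorm_sum_le (fun i _ => ?_) one_le_two).trans_eq
          (Finset.sum_congr rfl fun i _ => ?_)
        · exact (((innerSL ℝ _).continuous.aestronglyMeasurable.mul hf).smul_const _)
        · exact eLpNorm_congr_norm_ae (ae_of_all _ fun y => by simp [norm_smul])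
    _ ≤ ∑ i, c i * (eLpNorm g 2 (gaussianWeighted volume)
          + eLpNorm f 2 (gaussianWeighted volume)) := by
        refine Finset.sum_le_sum fun i _ => (hc i f (G i) (hG i)).trans ?_
        gcongr
        exact eLpNorm_mono (hG_le i)
    _ = (∑ i, c i) * (eLpNorm g 2 (gaussianWeighted volume)
          + eLpNorm f 2 (gaussianWeighted volume)) :=
        (Finset.sum_mul ..).symm

end WeakGradient

section Compactness

lemma eventually_forall_eLpNorm_comp_add_sub_le {ι : Type*} {N : ℕ}
    {f : ι → EuclideanSpace ℝ (Fin N) → ℝ}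
    {g : ι → EuclideanSpace ℝ (Fin N) → EuclideanSpace ℝ (Fin N)}
    (hfg : ∀ m, HasWeakGradient (f m) (g m)) {p : ℝ≥0∞} (hp : 1 ≤ p) (hp_top : p ≠ ⊤) {C : ℝ≥0∞}
    (hC : C ≠ ⊤) (hg : ∀ m, eLpNorm (g m) p volume ≤ C) {ε : ℝ≥0∞} (hε : ε ≠ 0) :
    ∀ᶠ v in 𝓝 0, ∀ m, eLpNorm (fun x => f m (x + v) - f m x) p volume ≤ ε := by
  have hlim : Tendsto (fun v : EuclideanSpace ℝ (Fin N) => N * ‖v‖ₑ * C) (𝓝 0) (𝓝 0) := by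
    have hcont : Continuous fun v : EuclideanSpace ℝ (Fin N) => N * ‖v‖ₑ * C :=
      (ENNReal.continuous_mul_const hC).comp
        ((ENNReal.continuous_const_mul (natCast_ne_top N)).comp continuous_enorm)
    simpa using hcont.tendsto 0
  filter_upwards [ENNReal.tendsto_nhds_zero.1 hlim ε hε.bot_lt] with v hv m
  calc eLpNorm (fun x => f m (x + v) - f m x) p volume
      ≤ N * ‖v‖ₑ * eLpNorm (g m) p volume := (hfg m).eLpNorm_comp_add_sub_le hp hp_top v
    _ ≤ N * ‖v‖ₑ * C := by
        gcongr
        exact hg m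
    _ ≤ ε := hv

lemma exists_strictMono_tendsto_eLpNorm_gaussianWeighted {N : ℕ}
    {f : ℕ → EuclideanSpace ℝ (Fin N) → ℝ}
    {g : ℕ → EuclideanSpace ℝ (Fin N) → EuclideanSpace ℝ (Fin N)}
    (hfg : ∀ m, HasWeakGradient (f m) (g m)) {C : ℝ≥0∞} (hC : C ≠ ⊤)
    (hf : ∀ m, eLpNorm (f m) 2 (gaussianWeighted volume) ≤ C)
    (hg : ∀ m, eLpNorm (g m) 2 (gaussianWeighted volume) ≤ C) :
    ∃ φ : ℕ → ℕ, StrictMono φ ∧ ∃ F, MemLp F 2 (gaussianWeighted volume) ∧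
      Tendsto (fun k => eLpNorm (f (φ k) - F) 2 (gaussianWeighted volume)) atTop (𝓝 0) := by
  have hmem : ∀ m, MemLp (f m) 2 (gaussianWeighted volume) := fun m =>
    ⟨(hfg m).1.aestronglyMeasurable.mono_ac gaussianWeighted_absolutelyContinuous,
      (hf m).trans_lt hC.lt_top⟩
  obtain ⟨φ, hφ, hφ_ball⟩ := exists_strictMono_forall_tendsto_eLpNorm_restrict_closedBall hC
    (fun m => (hmem m).mono_measure le_gaussianWeighted)
    (fun m => (eLpNorm_mono_measure _ le_gaussianWeighted).trans (hf m))
    (fun ε hε => eventually_forall_eLpNorm_comp_add_sub_le hfg one_le_two ofNat_ne_top hC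
      (fun m => (eLpNorm_mono_measure _ le_gaussianWeighted).trans (hg m)) hε)
  obtain ⟨c, hc, hmoment⟩ := exists_forall_eLpNorm_norm_smul_gaussianWeighted_le N
  have hmoment_le : ∀ m, eLpNorm (fun y => ‖y‖ • f m y) 2 (gaussianWeighted volume)
      ≤ c * (C + C) := fun m => (hmoment _ _ (hfg m)).trans <| by
    gcongr
    exacts [hg m, hf m]
  have hcauchy : Tendsto (fun mn : ℕ × ℕ =>
      eLpNorm (f (φ mn.1) - f (φ mn.2)) 2 (gaussianWeighted volume)) atTop (𝓝 0) :=
    tendsto_eLpNorm_sub_prod_of_tight (F := fun k => f (φ k)) one_le_two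
      (mul_ne_top hc (add_ne_top.2 ⟨hC, hC⟩)) (fun k => (hmem (φ k)).1)
      (fun k => hmoment_le (φ k))
      fun R => tendsto_eLpNorm_restrict_closedBall_gaussianWeighted ofNat_ne_top (hφ_ball R)
  exact ⟨φ, hφ, exists_tendsto_eLpNorm_sub_of_cauchy (fun k => hmem (φ k)) hcauchy⟩

end Compactness

/-- Compactness of the embedding `H¹(K) ↪ L²(K)`. -/
theorem stmt_8 (N : ℕ) (hN : 1 ≤ N)
    (f : ℕ → EuclideanSpace ℝ (Fin N) → ℝ)
    (g : ℕ → EuclideanSpace ℝ (Fin N) → EuclideanSpace ℝ (Fin N))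
    (hfg : ∀ m, HasWeakGradient (f m) (g m))
    (C : ℝ≥0∞) (hC : C < ⊤)
    (hbdd : ∀ m,
      (∫⁻ y : EuclideanSpace ℝ (Fin N),
          ENNReal.ofReal (Real.exp (‖y‖ ^ 2 / 4) * (f m y) ^ 2))
        + (∫⁻ y : EuclideanSpace ℝ (Fin N),
            ENNReal.ofReal (Real.exp (‖y‖ ^ 2 / 4) * ‖g m y‖ ^ 2)) ≤ C) :
    ∃ mk : ℕ → ℕ, StrictMono mk ∧
      ∃ fL : EuclideanSpace ℝ (Fin N) → ℝ,
        (∫⁻ y : EuclideanSpace ℝ (Fin N),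
            ENNReal.ofReal (Real.exp (‖y‖ ^ 2 / 4) * (fL y) ^ 2)) < ⊤ ∧
        Tendsto
          (fun k => ∫⁻ y : EuclideanSpace ℝ (Fin N),
            ENNReal.ofReal (Real.exp (‖y‖ ^ 2 / 4) * (f (mk k) y - fL y) ^ 2))
          atTop (nhds 0) := by
  have hnorm_sq (u : EuclideanSpace ℝ (Fin N) → ℝ) : eLpNorm u 2 (gaussianWeighted volume) ^ 2
      = ∫⁻ y, ENNReal.ofReal (Real.exp (‖y‖ ^ 2 / 4) * u y ^ 2) := by
    simp only [eLpNorm_two_gaussianWeighted_sq, gaussianWeight, Real.norm_eq_abs, sq_abs]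
  have hle_sqrt {a : ℝ≥0∞} (ha : a ^ 2 ≤ C) : a ≤ C ^ (2⁻¹ : ℝ) := by
    rwa [ENNReal.le_rpow_inv_iff two_pos, ENNReal.rpow_two]
  obtain ⟨φ, hφ, F, hF, hlim⟩ := exists_strictMono_tendsto_eLpNorm_gaussianWeighted hfg
    (ENNReal.rpow_ne_top_of_nonneg (by norm_num) hC.ne)
    (fun m => hle_sqrt <| by
      rw [hnorm_sq]
      exact le_self_add.trans (hbdd m))
    (fun m => hle_sqrt <| by
      rw [eLpNorm_two_gaussianWeighted_sq]
      exact le_add_self.trans (hbdd m))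
  refine ⟨φ, hφ, F, ?_, ?_⟩
  · rw [← hnorm_sq]
    exact ENNReal.pow_lt_top hF.2
  · simpa [hnorm_sq] using ENNReal.Tendsto.pow (n := 2) hlim
end

section
/- One-dimensional weighted Sobolev embedding into L^∞: Let N = 1 and K(y) = exp(y²/4) for y ∈ ℝ. If v : ℝ → ℝ is locally integrable with a weak derivative g : ℝ → ℝ such that ∫_ℝ K(y)( |v(y)|² + |g(y)|² ) dy < ∞, then the function y ↦ K(y)^{1/2} v(y) = exp(y²/8) v(y) is essentially bounded on ℝ; i.e. there exists M > 0 with |exp(y²/8) v(y)| ≤ M for almost every y ∈ ℝ. -/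
open MeasureTheory

/-!
A function with a locally integrable weak derivative has a representative `u` that is absolutely
continuous on every interval, so `u ^ 2` satisfies the fundamental theorem of calculus with
derivative `2 * u * u'`. Both are integrable towards infinity, hence `u ^ 2` vanishes there and, for
`y` to the right of the minimum of the weight, `u y ^ 2 = -∫ s in Ioi y, 2 * u s * u' s`. As `K` is
monotone on `Ici y`, it can be moved under the integral:
`K y * u y ^ 2 ≤ ∫ s in Ioi y, K s * (2 * |u s * u' s|) ≤ ∫ s, K s * (u s ^ 2 + u' s ^ 2)`.
Reflection gives the same bound on the left.
-/

open Set Filter Topology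
open scoped ContDiff

/-! ### Weighted bounds by the derivative -/

section Weight

variable {E : Type*} [NormedAddCommGroup E] {f f' : ℝ → E} {K : ℝ → ℝ} {a : ℝ}

lemma integrableOn_Ioi_of_integrableOn_weight_mul_norm (hKa : 0 < K a) (hK : MonotoneOn K (Ici a))
    (hf : AEStronglyMeasurable f) (hint : IntegrableOn (fun x ↦ K x * ‖f x‖) (Ioi a)) :
    IntegrableOn f (Ioi a) := by
  refine (hint.const_mul (K a)⁻¹).mono' hf.restrict ?_
  filter_upwards [ae_restrict_mem measurableSet_Ioi] with x hx
  rw [inv_mul_eq_div, le_div_iff₀' hKa]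
  gcongr
  exact hK self_mem_Ici (mem_Ioi.1 hx).le (mem_Ioi.1 hx).le

variable [NormedSpace ℝ E]

lemma setIntegral_Ioi_eq_neg_of_integral_eq_sub (hf : IntegrableOn f (Ioi a))
    (hf' : IntegrableOn f' (Ioi a)) (hftc : ∀ x, a ≤ x → ∫ t in a..x, f' t = f x - f a) :
    ∫ t in Ioi a, f' t = -f a := by
  have hlim : Tendsto f atTop (𝓝 ((∫ t in Ioi a, f' t) + f a)) := by
    refine ((intervalIntegral_tendsto_integral_Ioi a hf' tendsto_id).add_const (f a)).congr' ?_
    filter_upwards [eventually_ge_atTop a] with x hx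
    rw [id, hftc x hx, sub_add_cancel]
  have htop : ∀ s ∈ (atTop : Filter ℝ), volume s = ⊤ := fun s hs ↦ by
    obtain ⟨b, hb⟩ := mem_atTop_sets.1 hs
    exact top_unique (Real.volume_Ici (a := b) ▸ measure_mono hb)
  exact eq_neg_of_add_eq_zero_left <|
    IntegrableAtFilter.eq_zero_of_tendsto ⟨Ioi a, Ioi_mem_atTop a, hf⟩ htop hlim

lemma weight_mul_norm_le_setIntegral_Ioi (hKa : 0 ≤ K a) (hK : MonotoneOn K (Ici a))
    (hf : AEStronglyMeasurable f) (hf' : AEStronglyMeasurable f')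
    (hint : IntegrableOn (fun x ↦ K x * ‖f x‖) (Ioi a))
    (hint' : IntegrableOn (fun x ↦ K x * ‖f' x‖) (Ioi a))
    (hftc : ∀ x, a ≤ x → ∫ t in a..x, f' t = f x - f a) :
    K a * ‖f a‖ ≤ ∫ x in Ioi a, K x * ‖f' x‖ := by
  have hKle : ∀ x ∈ Ioi a, K a ≤ K x := fun x hx ↦
    hK self_mem_Ici (mem_Ioi.1 hx).le (mem_Ioi.1 hx).le
  rcases hKa.eq_or_lt with hKa | hKa
  · rw [← hKa, zero_mul]
    exact setIntegral_nonneg measurableSet_Ioi fun x hx ↦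
      mul_nonneg (hKa.trans_le (hKle x hx)) (norm_nonneg _)
  have hfi := integrableOn_Ioi_of_integrableOn_weight_mul_norm hKa hK hf hint
  have hfi' := integrableOn_Ioi_of_integrableOn_weight_mul_norm hKa hK hf' hint'
  calc K a * ‖f a‖ = K a * ‖∫ x in Ioi a, f' x‖ := by
        rw [setIntegral_Ioi_eq_neg_of_integral_eq_sub hfi hfi' hftc, norm_neg]
    _ ≤ K a * ∫ x in Ioi a, ‖f' x‖ := by gcongr; exact norm_integral_le_integral_norm _
    _ = ∫ x in Ioi a, K a * ‖f' x‖ := (integral_const_mul _ _).symm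
    _ ≤ ∫ x in Ioi a, K x * ‖f' x‖ :=
        setIntegral_mono_on (hfi'.norm.const_mul _) hint' measurableSet_Ioi fun x hx ↦ by
          gcongr
          exact hKle x hx

lemma weight_nonneg (hKa : 0 ≤ K a) (hanti : AntitoneOn K (Iic a)) (hmono : MonotoneOn K (Ici a))
    (y : ℝ) : 0 ≤ K y :=
  (le_total a y).elim (fun h ↦ hKa.trans (hmono self_mem_Ici h h))
    fun h ↦ hKa.trans (hanti h self_mem_Iic h)

lemma aestronglyMeasurable_weight (hanti : AntitoneOn K (Iic a)) (hmono : MonotoneOn K (Ici a)) :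
    AEStronglyMeasurable K := by
  have h : AEMeasurable K (volume.restrict (Iic a ∪ Ici a)) := aemeasurable_union_iff.2
    ⟨aemeasurable_restrict_of_antitoneOn measurableSet_Iic hanti,
      aemeasurable_restrict_of_monotoneOn measurableSet_Ici hmono⟩
  rw [Iic_union_Ici, Measure.restrict_univ] at h
  exact h.aestronglyMeasurable

lemma weight_mul_norm_le_integral_of_ge (hKa : 0 ≤ K a) (hanti : AntitoneOn K (Iic a))
    (hmono : MonotoneOn K (Ici a)) (hf : AEStronglyMeasurable f) (hf' : AEStronglyMeasurable f')
    (hint : Integrable fun x ↦ K x * ‖f x‖) (hint' : Integrable fun x ↦ K x * ‖f' x‖)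
    (hftc : ∀ x y, ∫ t in x..y, f' t = f y - f x) {y : ℝ} (hy : a ≤ y) :
    K y * ‖f y‖ ≤ ∫ x, K x * ‖f' x‖ :=
  have hK0 := weight_nonneg hKa hanti hmono
  (weight_mul_norm_le_setIntegral_Ioi (hK0 y) (hmono.mono (Ici_subset_Ici.2 hy)) hf hf'
    hint.integrableOn hint'.integrableOn fun x _ ↦ hftc y x).trans
    (setIntegral_le_integral hint' (ae_of_all _ fun x ↦ mul_nonneg (hK0 x) (norm_nonneg _)))

theorem weight_mul_norm_le_integral (hKa : 0 ≤ K a) (hanti : AntitoneOn K (Iic a))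
    (hmono : MonotoneOn K (Ici a)) (hf : AEStronglyMeasurable f) (hf' : AEStronglyMeasurable f')
    (hint : Integrable fun x ↦ K x * ‖f x‖) (hint' : Integrable fun x ↦ K x * ‖f' x‖)
    (hftc : ∀ x y, ∫ t in x..y, f' t = f y - f x) (y : ℝ) :
    K y * ‖f y‖ ≤ ∫ x, K x * ‖f' x‖ := by
  rcases le_total a y with hy | hy
  · exact weight_mul_norm_le_integral_of_ge hKa hanti hmono hf hf' hint hint' hftc hy
  have hneg := Measure.measurePreserving_neg (volume : Measure ℝ)
  have hftc_neg : ∀ x z, ∫ t in x..z, -f' (-t) = f (-z) - f (-x) := fun x z ↦ by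
    rw [intervalIntegral.integral_neg, intervalIntegral.integral_comp_neg, hftc, neg_sub]
  have key := weight_mul_norm_le_integral_of_ge
    (K := fun x ↦ K (-x)) (f := fun x ↦ f (-x)) (f' := fun x ↦ -f' (-x)) (a := -a)
    (by simpa only [neg_neg] using hKa)
    (fun x hx z hz hxz ↦ hmono (mem_Ici.2 (le_neg.1 hz)) (mem_Ici.2 (le_neg.1 hx)) (neg_le_neg hxz))
    (fun x hx z hz hxz ↦ hanti (mem_Iic.2 (neg_le.1 hz)) (mem_Iic.2 (neg_le.1 hx)) (neg_le_neg hxz))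
    (hf.comp_measurePreserving hneg) (hf'.comp_measurePreserving hneg).neg
    hint.comp_neg (by simpa only [norm_neg] using hint'.comp_neg) hftc_neg (neg_le_neg hy)
  simpa only [neg_neg, norm_neg, integral_neg_eq_self (fun x ↦ K x * ‖f' x‖)] using key

lemma continuous_of_absolutelyContinuous {F : Type*} [SeminormedAddCommGroup F] {u : ℝ → F}
    (hu : ∀ x y, AbsolutelyContinuousOnInterval u x y) : Continuous u :=
  continuous_iff_continuousAt.2 fun x ↦ (hu (x - 1) (x + 1)).continuousOn.continuousAt <| by
    rw [uIcc_of_le (by linarith)]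
    exact Icc_mem_nhds (by linarith) (by linarith)

theorem weight_mul_sq_le_integral {u : ℝ → ℝ} (hKa : 0 ≤ K a) (hanti : AntitoneOn K (Iic a))
    (hmono : MonotoneOn K (Ici a)) (hu : ∀ x y, AbsolutelyContinuousOnInterval u x y)
    (hint : Integrable fun x ↦ K x * (u x ^ 2 + deriv u x ^ 2)) (y : ℝ) :
    K y * u y ^ 2 ≤ ∫ x, K x * (u x ^ 2 + deriv u x ^ 2) := by
  have hK0 := weight_nonneg hKa hanti hmono
  have hKm := aestronglyMeasurable_weight hanti hmono
  have hum : AEStronglyMeasurable u := (continuous_of_absolutelyContinuous hu).aestronglyMeasurable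
  have hdm : AEStronglyMeasurable (deriv u) := (measurable_deriv u).aestronglyMeasurable
  have hsq_le : ∀ x, ‖u x ^ 2‖ ≤ u x ^ 2 + deriv u x ^ 2 := fun x ↦ by
    rw [Real.norm_of_nonneg (sq_nonneg _)]
    linarith [sq_nonneg (deriv u x)]
  have hderiv_le : ∀ x, ‖2 * (u x * deriv u x)‖ ≤ u x ^ 2 + deriv u x ^ 2 := fun x ↦ by
    rw [Real.norm_eq_abs, abs_le]
    constructor <;> nlinarith [sq_nonneg (u x - deriv u x), sq_nonneg (u x + deriv u x)]
  have integrable_of_le {h : ℝ → ℝ} (hh : AEStronglyMeasurable h)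
      (hle : ∀ x, ‖h x‖ ≤ u x ^ 2 + deriv u x ^ 2) : Integrable fun x ↦ K x * ‖h x‖ :=
    hint.mono' (hKm.mul hh.norm) <| ae_of_all _ fun x ↦ by
      rw [norm_mul, norm_norm, Real.norm_of_nonneg (hK0 x)]
      exact mul_le_mul_of_nonneg_left (hle x) (hK0 x)
  have hint' := integrable_of_le ((hum.mul hdm).const_mul 2) hderiv_le
  have hftc : ∀ x z, ∫ t in x..z, 2 * (u t * deriv u t) = u z ^ 2 - u x ^ 2 := fun x z ↦ by
    rw [sq, sq, ← (hu x z).integral_deriv_mul_eq_sub (hu x z)]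
    congr! 2 with t
    ring
  calc K y * u y ^ 2 = K y * ‖u y ^ 2‖ := by rw [Real.norm_of_nonneg (sq_nonneg _)]
    _ ≤ ∫ x, K x * ‖2 * (u x * deriv u x)‖ :=
        weight_mul_norm_le_integral hKa hanti hmono (hum.pow 2) ((hum.mul hdm).const_mul 2)
          (integrable_of_le (hum.pow 2) hsq_le) hint' hftc y
    _ ≤ ∫ x, K x * (u x ^ 2 + deriv u x ^ 2) :=
        integral_mono hint' hint fun x ↦ mul_le_mul_of_nonneg_left (hderiv_le x) (hK0 x)

end Weight

/-! ### Weak derivatives on the line -/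

lemma exists_tsupport_subset_Ioo {E : Type*} [Zero E] {f : ℝ → E} (hf : HasCompactSupport f) :
    ∃ R, tsupport f ⊆ Ioo (-R) R := by
  obtain ⟨R, hsub⟩ := hf.isCompact.isBounded.subset_ball 0
  exact ⟨R, by simpa only [Real.ball_eq_Ioo, zero_sub, zero_add] using hsub⟩

lemma exists_contDiff_hasCompactSupport_deriv_eq {E : Type*} [NormedAddCommGroup E]
    [NormedSpace ℝ E] [CompleteSpace E] {ψ : ℝ → E} (hψ : ContDiff ℝ ∞ ψ)
    (hψc : HasCompactSupport ψ) (hψ0 : ∫ x, ψ x = 0) :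
    ∃ φ : ℝ → E, ContDiff ℝ ∞ φ ∧ HasCompactSupport φ ∧ deriv φ = ψ := by
  obtain ⟨R, hsupp⟩ := exists_tsupport_subset_Ioo hψc
  have hderivAt : ∀ x, HasDerivAt (fun x ↦ ∫ t in (-R)..x, ψ t) (ψ x) x := fun x ↦
    (hψ.continuous.integral_hasStrictDerivAt _ _).hasDerivAt
  have hderiv : deriv (fun x ↦ ∫ t in (-R)..x, ψ t) = ψ := funext fun x ↦ (hderivAt x).deriv
  refine ⟨fun x ↦ ∫ t in (-R)..x, ψ t,
    contDiff_infty_iff_deriv.2 ⟨fun x ↦ (hderivAt x).differentiableAt, hderiv.symm ▸ hψ⟩,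
    HasCompactSupport.intro (isCompact_Icc (a := -R) (b := R)) fun x hx ↦ ?_, hderiv⟩
  rw [mem_Icc, not_and_or, not_le, not_le] at hx
  rcases hx with hx | hx
  · refine intervalIntegral.integral_zero_ae (ae_of_all _ fun t ht ↦ ?_)
    rw [uIoc_of_ge hx.le] at ht
    exact image_eq_zero_of_notMem_tsupport fun h ↦ (hsupp h).1.not_ge ht.2
  · rw [intervalIntegral.integral_eq_integral_of_support_subset, hψ0]
    exact fun t ht ↦ Ioo_subset_Ioc_self
      ⟨(hsupp (subset_tsupport ψ ht)).1, (hsupp (subset_tsupport ψ ht)).2.trans hx⟩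

/-- The du Bois-Reymond lemma. -/
theorem exists_ae_eq_const_of_integral_deriv_smul_eq_zero {E : Type*} [NormedAddCommGroup E]
    [NormedSpace ℝ E] [CompleteSpace E] {u : ℝ → E} (hu : LocallyIntegrable u)
    (h : ∀ φ : ℝ → ℝ, ContDiff ℝ ∞ φ → HasCompactSupport φ → ∫ y, deriv φ y • u y = 0) :
    ∃ c, ∀ᵐ y, u y = c := by
  let b : ContDiffBump (0 : ℝ) := ⟨1, 2, one_pos, one_lt_two⟩
  set χ : ℝ → ℝ := b.normed volume
  have hχ : ContDiff ℝ ∞ χ := b.contDiff_normed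
  have hχc : HasCompactSupport χ := b.hasCompactSupport_normed
  refine ⟨∫ y, χ y • u y,
    ae_eq_of_integral_contDiff_smul_eq hu (locallyIntegrable_const _) fun ψ hψ hψc ↦ ?_⟩
  set m := ∫ y, ψ y
  have hψi : Integrable ψ := hψ.continuous.integrable_of_hasCompactSupport hψc
  -- `ψ - m χ` has mean zero, hence is the derivative of a test function.
  obtain ⟨φ, hφ, hφc, hφ'⟩ := exists_contDiff_hasCompactSupport_deriv_eq
    (hψ.sub (contDiff_const.mul hχ)) (hψc.sub (hχc.mul_left (f := fun _ ↦ m))) (by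
      rw [integral_sub hψi (b.integrable_normed.const_mul m), integral_const_mul,
        b.integral_normed, mul_one, sub_self])
  have hzero := h φ hφ hφc
  simp only [hφ', sub_smul, mul_smul] at hzero
  rw [integral_sub (hu.integrable_smul_left_of_hasCompactSupport hψ.continuous hψc)
    ((hu.integrable_smul_left_of_hasCompactSupport hχ.continuous hχc).fun_smul m),
    integral_smul, sub_eq_zero] at hzero
  rw [hzero, integral_smul_const]

lemma integral_mul_deriv_eq_neg_of_absolutelyContinuous {u φ : ℝ → ℝ}
    (hu : ∀ x y, AbsolutelyContinuousOnInterval u x y)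
    (hφ : ∀ x y, AbsolutelyContinuousOnInterval φ x y) (hφc : HasCompactSupport φ) :
    ∫ y, u y * deriv φ y = -∫ y, deriv u y * φ y := by
  obtain ⟨R, hR⟩ := exists_tsupport_subset_Ioo hφc
  have hIoc : tsupport φ ⊆ Ioc (-R) R := hR.trans Ioo_subset_Ioc_self
  have hφR : φ R = 0 := image_eq_zero_of_notMem_tsupport fun h ↦ (hR h).2.false
  have hφR' : φ (-R) = 0 := image_eq_zero_of_notMem_tsupport fun h ↦ (hR h).1.false
  have key := (hu (-R) R).integral_mul_deriv_eq_deriv_mul (hφ (-R) R)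
  rwa [hφR, hφR', mul_zero, mul_zero, sub_zero, zero_sub,
    intervalIntegral.integral_eq_integral_of_support_subset
      ((Function.support_mul_subset_right _ _).trans (support_deriv_subset.trans hIoc)),
    intervalIntegral.integral_eq_integral_of_support_subset
      ((Function.support_mul_subset_right _ _).trans ((subset_tsupport φ).trans hIoc))] at key

/-- `g` is the weak derivative of `v` on `ℝ`. Local integrability of both functions is part of the
notion, so that the integrals against test functions are never junk values. -/
structure HasWeakDeriv (v g : ℝ → ℝ) : Prop where
  locallyIntegrable : LocallyIntegrable v
  locallyIntegrable_deriv : LocallyIntegrable g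
  integral_mul_deriv : ∀ φ : ℝ → ℝ, ContDiff ℝ ∞ φ → HasCompactSupport φ →
    ∫ y, v y * deriv φ y = -∫ y, g y * φ y

lemma integrable_mul_of_hasCompactSupport {u φ : ℝ → ℝ} (hu : LocallyIntegrable u)
    (hφ : Continuous φ) (hφc : HasCompactSupport φ) : Integrable fun y ↦ u y * φ y :=
  hu.integrable_smul_right_of_hasCompactSupport hφ hφc

lemma integrable_mul_deriv_of_hasCompactSupport {u φ : ℝ → ℝ} (hu : LocallyIntegrable u)
    (hφ : ContDiff ℝ ∞ φ) (hφc : HasCompactSupport φ) : Integrable fun y ↦ u y * deriv φ y :=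
  integrable_mul_of_hasCompactSupport hu (hφ.continuous_deriv (by simp)) hφc.deriv

namespace HasWeakDeriv

variable {v w g h : ℝ → ℝ}

lemma sub (hv : HasWeakDeriv v g) (hw : HasWeakDeriv w h) : HasWeakDeriv (v - w) (g - h) where
  locallyIntegrable := hv.locallyIntegrable.sub hw.locallyIntegrable
  locallyIntegrable_deriv := hv.locallyIntegrable_deriv.sub hw.locallyIntegrable_deriv
  integral_mul_deriv φ hφ hφc := by
    simp only [Pi.sub_apply, sub_mul]
    rw [integral_sub (integrable_mul_deriv_of_hasCompactSupport hv.locallyIntegrable hφ hφc)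
        (integrable_mul_deriv_of_hasCompactSupport hw.locallyIntegrable hφ hφc),
      integral_sub
        (integrable_mul_of_hasCompactSupport hv.locallyIntegrable_deriv hφ.continuous hφc)
        (integrable_mul_of_hasCompactSupport hw.locallyIntegrable_deriv hφ.continuous hφc),
      hv.integral_mul_deriv φ hφ hφc, hw.integral_mul_deriv φ hφ hφc, neg_sub_neg, neg_sub]

lemma exists_ae_eq_const (hv : HasWeakDeriv v 0) : ∃ c, ∀ᵐ y, v y = c :=
  exists_ae_eq_const_of_integral_deriv_smul_eq_zero hv.locallyIntegrable fun φ hφ hφc ↦ by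
    simpa [mul_comm] using hv.integral_mul_deriv φ hφ hφc

end HasWeakDeriv

section Primitive

variable {g : ℝ → ℝ}

lemma absolutelyContinuousOnInterval_primitive (hg : LocallyIntegrable g) (a x y : ℝ) :
    AbsolutelyContinuousOnInterval (fun z ↦ ∫ t in a..z, g t) x y := by
  have hgi : IntervalIntegrable g volume (min a (min x y)) (max a (max x y)) :=
    (hg.integrableOn_isCompact isCompact_uIcc).intervalIntegrable
  refine (hgi.absolutelyContinuousOnInterval_intervalIntegral ?_).mono (uIcc_subset_uIcc ?_ ?_) <;>
    simp

lemma hasWeakDeriv_primitive (hg : LocallyIntegrable g) (a : ℝ) :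
    HasWeakDeriv (fun x ↦ ∫ t in a..x, g t) g where
  locallyIntegrable := (continuous_of_absolutelyContinuous
    (absolutelyContinuousOnInterval_primitive hg a)).locallyIntegrable
  locallyIntegrable_deriv := hg
  integral_mul_deriv φ hφ hφc := by
    rw [integral_mul_deriv_eq_neg_of_absolutelyContinuous
      (absolutelyContinuousOnInterval_primitive hg a)
      (fun x y ↦ (hφ.of_le (by simp)).contDiffOn.absolutelyContinuousOnInterval) hφc]
    congr 1
    refine integral_congr_ae ?_
    filter_upwards [LocallyIntegrable.ae_hasDerivAt_integral hg] with x hx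
    rw [(hx a).deriv]

end Primitive

theorem HasWeakDeriv.exists_absolutelyContinuous_ae_eq {v g : ℝ → ℝ} (h : HasWeakDeriv v g) :
    ∃ u : ℝ → ℝ, (∀ x y, AbsolutelyContinuousOnInterval u x y) ∧ v =ᵐ[volume] u ∧
      g =ᵐ[volume] deriv u := by
  have hg := h.locallyIntegrable_deriv
  obtain ⟨c, hc⟩ := HasWeakDeriv.exists_ae_eq_const
    (sub_self g ▸ h.sub (hasWeakDeriv_primitive hg 0))
  refine ⟨fun x ↦ (∫ t in (0 : ℝ)..x, g t) + c, fun x y ↦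
    (absolutelyContinuousOnInterval_primitive hg 0 x y).add
      contDiffOn_const.absolutelyContinuousOnInterval, ?_, ?_⟩
  · filter_upwards [hc] with y hy
    exact sub_eq_iff_eq_add'.1 hy
  · filter_upwards [LocallyIntegrable.ae_hasDerivAt_integral hg] with y hy
    exact ((hy 0).add_const c).deriv.symm

/-! ### Junk values in the defining identity -/

lemma locallyIntegrable_of_integrable_mul_contDiff {g : ℝ → ℝ}
    (h : ∀ φ : ℝ → ℝ, ContDiff ℝ ∞ φ → HasCompactSupport φ → Integrable fun y ↦ g y * φ y) :
    LocallyIntegrable g := fun x ↦ by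
  let b : ContDiffBump x := ⟨1, 2, one_pos, one_lt_two⟩
  refine ⟨Metric.closedBall x 1, Metric.closedBall_mem_nhds x one_pos, ?_⟩
  refine (h b b.contDiff b.hasCompactSupport).integrableOn.congr_fun (fun y hy ↦ ?_)
    Metric.isClosed_closedBall.measurableSet
  simp only [b.one_of_mem_closedBall hy, mul_one]

lemma hasWeakDeriv_zero_of_not_integrable_mul {v g φ₀ : ℝ → ℝ} (hv : LocallyIntegrable v)
    (hweak : ∀ φ : ℝ → ℝ, ContDiff ℝ ∞ φ → HasCompactSupport φ →
      ∫ y, v y * deriv φ y = -∫ y, g y * φ y)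
    (hφ₀ : ContDiff ℝ ∞ φ₀) (hφ₀c : HasCompactSupport φ₀)
    (hnot : ¬ Integrable fun y ↦ g y * φ₀ y) : HasWeakDeriv v 0 := by
  have hjunk : ∀ φ : ℝ → ℝ, ContDiff ℝ ∞ φ → HasCompactSupport φ →
      (¬ Integrable fun y ↦ g y * φ y) → ∫ y, v y * deriv φ y = 0 := fun φ hφ hφc hn ↦ by
    rw [hweak φ hφ hφc, integral_undef hn, neg_zero]
  refine ⟨hv, locallyIntegrable_zero, fun φ hφ hφc ↦ ?_⟩
  simp only [Pi.zero_apply, zero_mul, integral_zero, neg_zero]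
  by_cases hi : Integrable fun y ↦ g y * φ y
  · have hnot_add : ¬ Integrable fun y ↦ g y * (φ₀ + φ) y := fun hadd ↦
      hnot <| by simpa [mul_add, Pi.sub_def] using hadd.sub hi
    have hsum := hjunk (φ₀ + φ) (hφ₀.add hφ) (hφ₀c.add hφc) hnot_add
    have hderiv : ∀ y, deriv (φ₀ + φ) y = deriv φ₀ y + deriv φ y := fun y ↦
      deriv_add (hφ₀.differentiable (by simp) y) (hφ.differentiable (by simp) y)
    simp only [hderiv, mul_add] at hsum
    rwa [integral_add (integrable_mul_deriv_of_hasCompactSupport hv hφ₀ hφ₀c)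
      (integrable_mul_deriv_of_hasCompactSupport hv hφ hφc), hjunk φ₀ hφ₀ hφ₀c hnot, zero_add]
      at hsum
  · exact hjunk φ hφ hφc hi

/-- The integration by parts identity alone does not make `g` locally integrable: where `g * φ` is
not integrable its integral is `0` by convention. If this happens for some `φ`, linearity in the
test function forces `v` to have weak derivative `0`. -/
lemma exists_hasWeakDeriv_abs_le {v g : ℝ → ℝ} (hv : LocallyIntegrable v)
    (hweak : ∀ φ : ℝ → ℝ, ContDiff ℝ ∞ φ → HasCompactSupport φ →
      ∫ y, v y * deriv φ y = -∫ y, g y * φ y) :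
    ∃ g', HasWeakDeriv v g' ∧ ∀ y, |g' y| ≤ |g y| := by
  by_cases hg : ∀ φ : ℝ → ℝ, ContDiff ℝ ∞ φ → HasCompactSupport φ →
      Integrable fun y ↦ g y * φ y
  · exact ⟨g, ⟨hv, locallyIntegrable_of_integrable_mul_contDiff hg, hweak⟩, fun _ ↦ le_rfl⟩
  · push Not at hg
    obtain ⟨φ₀, hφ₀, hφ₀c, hnot⟩ := hg
    exact ⟨0, hasWeakDeriv_zero_of_not_integrable_mul hv hweak hφ₀ hφ₀c hnot, fun y ↦ by simp⟩

theorem stmt_11_general {v g K : ℝ → ℝ} {a : ℝ} (hKa : 0 ≤ K a) (hanti : AntitoneOn K (Iic a))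
    (hmono : MonotoneOn K (Ici a)) (hv : LocallyIntegrable v)
    (hweak : ∀ φ : ℝ → ℝ, ContDiff ℝ ∞ φ → HasCompactSupport φ →
      ∫ y, v y * deriv φ y = -∫ y, g y * φ y)
    (hint : Integrable fun y ↦ K y * (v y ^ 2 + g y ^ 2)) :
    ∀ᵐ y, |√(K y) * v y| ≤ √(∫ s, K s * (v s ^ 2 + g s ^ 2)) := by
  obtain ⟨g', hg', hle⟩ := exists_hasWeakDeriv_abs_le hv hweak
  obtain ⟨u, hu, hvu, hgu⟩ := hg'.exists_absolutelyContinuous_ae_eq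
  have hK0 := weight_nonneg hKa hanti hmono
  have hdom : ∀ᵐ y, K y * (u y ^ 2 + deriv u y ^ 2) ≤ K y * (v y ^ 2 + g y ^ 2) := by
    filter_upwards [hvu, hgu] with y hvy hgy
    rw [← hvy, ← hgy]
    exact mul_le_mul_of_nonneg_left (add_le_add_right (sq_le_sq.2 (hle y)) _) (hK0 y)
  have hintu : Integrable fun y ↦ K y * (u y ^ 2 + deriv u y ^ 2) := by
    have hum : AEStronglyMeasurable u := hv.aestronglyMeasurable.congr hvu
    have hdm : AEStronglyMeasurable (deriv u) := (measurable_deriv u).aestronglyMeasurable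
    refine hint.mono' ((aestronglyMeasurable_weight hanti hmono).mul
      ((hum.pow 2).add (hdm.pow 2))) (hdom.mono fun y hy ↦ ?_)
    rwa [Real.norm_of_nonneg (mul_nonneg (hK0 y) (by positivity))]
  filter_upwards [hvu] with y hvy
  refine Real.le_sqrt_of_sq_le ?_
  rw [sq_abs, mul_pow, Real.sq_sqrt (hK0 y), hvy]
  exact (weight_mul_sq_le_integral hKa hanti hmono hu hintu y).trans
    (integral_mono_ae hintu hint hdom)

lemma antitoneOn_exp_sq_div_four : AntitoneOn (fun y : ℝ ↦ Real.exp (y ^ 2 / 4)) (Iic 0) :=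
  fun x hx y hy hxy ↦ Real.exp_le_exp.2 (by nlinarith [mem_Iic.1 hx, mem_Iic.1 hy])

lemma monotoneOn_exp_sq_div_four : MonotoneOn (fun y : ℝ ↦ Real.exp (y ^ 2 / 4)) (Ici 0) :=
  fun x hx y hy hxy ↦ Real.exp_le_exp.2 (by nlinarith [mem_Ici.1 hx, mem_Ici.1 hy])

/-- One-dimensional weighted Sobolev embedding into `L^∞`. -/
theorem stmt_11 (v g : ℝ → ℝ)
    (hv : MeasureTheory.LocallyIntegrable v volume)
    (hweak : ∀ φ : ℝ → ℝ, ContDiff ℝ (⊤ : ℕ∞) φ → HasCompactSupport φ →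
      ∫ y : ℝ, v y * deriv φ y = -∫ y : ℝ, g y * φ y)
    (hint : Integrable (fun y : ℝ => Real.exp (y ^ 2 / 4) * ((v y) ^ 2 + (g y) ^ 2))) :
    ∃ M > (0 : ℝ), ∀ᵐ y : ℝ, |Real.exp (y ^ 2 / 8) * v y| ≤ M := by
  refine ⟨√(∫ y, Real.exp (y ^ 2 / 4) * (v y ^ 2 + g y ^ 2)) + 1, by positivity, ?_⟩
  filter_upwards [stmt_11_general (by positivity) antitoneOn_exp_sq_div_four
    monotoneOn_exp_sq_div_four hv hweak hint] with y hy
  rw [show y ^ 2 / 8 = y ^ 2 / 4 / 2 by ring, Real.exp_half]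
  linarith
end
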